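/- arXiv:2103.04587 — 2 statements merged into one kernel-verified Lean document; each statement's English description precedes it below -/
import Mathlib

section
/- Let n ≥ 2, let X be the set of the two degree-one vertices (endpoints) of the path P_n, let H be a connected simple graph, and let J := (P_n, X) ∨ H be the partial join obtained from the disjoint union of P_n and H by joining each endpoint of P_n to every vertex of H. Then for every s ∈ ℕ₀ with 2s ≤ n + |H|, there exists a matrix A ∈ S(J) whose spectrum consists of exactly s eigenvalues of multiplicity 2 and n + |H| − 2s eigenvalues of multiplicity 1 (i.e., A realises the unordered multiplicity list {2^(s), 1^(n+|H|−2s)}). -/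
open Matrix Filter

/-- `A ∈ S(G)`: real symmetric matrix whose off-diagonal zero pattern is given by `G`. -/
def inS {V : Type*} (G : SimpleGraph V) (A : Matrix V V ℝ) : Prop :=
  A.IsSymm ∧ ∀ i j : V, i ≠ j → (A i j ≠ 0 ↔ G.Adj i j)

/-- The spectrum of a matrix, as the multiset of roots of its characteristic polynomial. -/
noncomputable def specMultiset {V : Type*} [Fintype V] [DecidableEq V]
    (A : Matrix V V ℝ) : Multiset ℝ :=
  A.charpoly.roots

/-- The number of distinct eigenvalues of a matrix. -/
noncomputable def qMat {V : Type*} [Fintype V] [DecidableEq V] (A : Matrix V V ℝ) : ℕ :=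
  (specMultiset A).toFinset.card

/-- `q(G)`: the minimum number of distinct eigenvalues over matrices in `S(G)`. -/
noncomputable def qGraph {V : Type*} [Fintype V] [DecidableEq V] (G : SimpleGraph V) : ℕ :=
  sInf {q | ∃ A : Matrix V V ℝ, inS G A ∧ qMat A = q}

/-- The strong spectral property. -/
def HasSSP {V : Type*} [Fintype V] [DecidableEq V] (A : Matrix V V ℝ) : Prop :=
  ∀ X : Matrix V V ℝ, X.IsSymm → A * X = X * A →
    Matrix.hadamard A X = 0 → Matrix.hadamard (1 : Matrix V V ℝ) X = 0 → X = 0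

/-- Generic realisability of a multiset of eigenvalues for a graph. -/
def GenericallyRealisable {V : Type*} [Fintype V] [DecidableEq V]
    (G : SimpleGraph V) (σ : Multiset ℝ) : Prop :=
  ∀ Y : Finset (V → ℝ), (∀ y ∈ Y, y ≠ 0) →
    ∃ (d : V → ℝ) (U : Matrix V V ℝ),
      Multiset.map d Finset.univ.val = σ ∧ Uᵀ * U = 1 ∧
      inS G (U * Matrix.diagonal d * Uᵀ) ∧
      ∀ y ∈ Y, ∀ i, U.mulVec y i ≠ 0

/-- The partial join `(G₁, X) ∨ G₂`: the disjoint union of `G₁` and `G₂` together with all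
edges joining vertices of `X ⊆ V(G₁)` to vertices of `G₂`. -/
def partialJoin {α β : Type*} (G₁ : SimpleGraph α) (X : Set α) (G₂ : SimpleGraph β) :
    SimpleGraph (α ⊕ β) where
  Adj x y :=
    (∃ a b, G₁.Adj a b ∧ x = Sum.inl a ∧ y = Sum.inl b) ∨
    (∃ a b, G₂.Adj a b ∧ x = Sum.inr a ∧ y = Sum.inr b) ∨
    (∃ a ∈ X, ∃ b, x = Sum.inl a ∧ y = Sum.inr b) ∨
    (∃ a ∈ X, ∃ b, x = Sum.inr b ∧ y = Sum.inl a)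
  symm := by
    constructor
    rintro x y (⟨a, b, hab, rfl, rfl⟩ | ⟨a, b, hab, rfl, rfl⟩ | ⟨a, ha, b, rfl, rfl⟩ |
      ⟨a, ha, b, rfl, rfl⟩)
    · exact Or.inl ⟨b, a, hab.symm, rfl, rfl⟩
    · exact Or.inr (Or.inl ⟨b, a, hab.symm, rfl, rfl⟩)
    · exact Or.inr (Or.inr (Or.inr ⟨a, ha, b, rfl, rfl⟩))
    · exact Or.inr (Or.inr (Or.inl ⟨a, ha, b, rfl, rfl⟩))
  loopless := by
    constructor
    rintro x (⟨a, b, hab, rfl, h⟩ | ⟨a, b, hab, rfl, h⟩ | ⟨a, ha, b, rfl, h⟩ | ⟨a, ha, b, rfl, h⟩)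
    · cases h; exact hab.ne rfl
    · cases h; exact hab.ne rfl
    · exact (Sum.inl_ne_inr h).elim
    · exact (Sum.inr_ne_inl h).elim

/-- The join `G₁ ∨ G₂` of two graphs. -/
def graphJoin {α β : Type*} (G₁ : SimpleGraph α) (G₂ : SimpleGraph β) : SimpleGraph (α ⊕ β) :=
  partialJoin G₁ Set.univ G₂

/-- The disjoint union of a family of graphs. -/
def sigmaGraph {ι : Type*} {α : ι → Type*} (G : ∀ i, SimpleGraph (α i)) :
    SimpleGraph (Σ i, α i) where
  Adj x y := ∃ (i : ι) (a b : α i), (G i).Adj a b ∧ x = ⟨i, a⟩ ∧ y = ⟨i, b⟩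
  symm := by
    constructor
    rintro x y ⟨i, a, b, hab, rfl, rfl⟩
    exact ⟨i, b, a, hab.symm, rfl, rfl⟩
  loopless := by
    constructor
    rintro x ⟨i, a, b, hab, rfl, h⟩
    obtain rfl : a = b := by simpa using h
    exact hab.ne rfl


lemma exists_QR {M : ℕ} (K : Matrix (Fin M) (Fin M) ℝ) (hK : K.det ≠ 0) :
    ∃ W : Matrix (Fin M) (Fin M) ℝ, W * Wᵀ = 1 ∧ (∀ i j, j < i → (W * K) i j = 0) ∧
      ∀ i, (W * K) i i ≠ 0 := by
  let f : Fin M → EuclideanSpace ℝ (Fin M) := fun j => WithLp.toLp 2 (fun k => K k j)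
  have hcard : Module.finrank ℝ (EuclideanSpace ℝ (Fin M)) = Fintype.card (Fin M) := by simp
  let e := InnerProductSpace.gramSchmidtOrthonormalBasis hcard f
  let W : Matrix (Fin M) (Fin M) ℝ := Matrix.of fun i k => e i k
  have hWa : ∀ i k, W i k = e i k := fun _ _ => rfl
  have hW : W * Wᵀ = 1 := by
    ext i j
    have := orthonormal_iff_ite.mp e.orthonormal i j
    simp only [PiLp.inner_apply, RCLike.inner_apply, conj_trivial] at this
    rw [Matrix.mul_apply, Matrix.one_apply, ← this]
    exact Finset.sum_congr rfl (fun k _ => by rw [transpose_apply, hWa, hWa]; ring)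
  have hR : ∀ i j, j < i → (W * K) i j = 0 := by
    intro i j hij
    have := InnerProductSpace.gramSchmidtOrthonormalBasis_inv_triangular hcard f hij
    simp only [PiLp.inner_apply, RCLike.inner_apply, conj_trivial] at this
    rw [Matrix.mul_apply, ← this]
    exact Finset.sum_congr rfl (fun k _ => by rw [hWa, mul_comm])
  refine ⟨W, hW, hR, ?_⟩
  have hdet : (W * K).det ≠ 0 := by
    rw [det_mul]
    refine mul_ne_zero ?_ hK
    intro h0
    have := congrArg det hW
    rw [det_mul, h0] at this
    simp at this
  rw [det_of_isUpperTriangular (fun i j hij => hR i j hij)] at hdet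
  intro i hi
  exact hdet (Finset.prod_eq_zero (Finset.mem_univ i) hi)

lemma lanczos {M : ℕ} (ν a : Fin M → ℝ) (hν : Function.Injective ν) (ha : ∀ k, a k ≠ 0) :
    ∃ W : Matrix (Fin M) (Fin M) ℝ, W * Wᵀ = 1 ∧
      (∀ i j : Fin M, j.val + 1 < i.val → (W * diagonal ν * Wᵀ) i j = 0) ∧
      (∀ i j : Fin M, j.val + 1 = i.val → (W * diagonal ν * Wᵀ) i j ≠ 0) ∧
      (∀ i : Fin M, (W *ᵥ a) i ≠ 0 ↔ i.val = 0) ∧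
      (∀ b : Fin M → ℝ, b ≠ 0 → (∀ j : ℕ, j + 1 < M → ∑ k, b k * (a k * ν k ^ j) = 0) →
        ∀ i : Fin M, (W *ᵥ b) i ≠ 0 ↔ i.val + 1 = M) := by
  let K : Matrix (Fin M) (Fin M) ℝ := diagonal a * vandermonde ν
  have hKa : ∀ k j, K k j = a k * ν k ^ j.val := fun k j => by
    simp [K, diagonal_mul, vandermonde_apply]
  have hK : K.det ≠ 0 := by
    rw [det_mul, det_diagonal]
    exact mul_ne_zero (Finset.prod_ne_zero_iff.mpr fun k _ => ha k)
      (det_vandermonde_ne_zero_iff.mpr hν)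
  obtain ⟨W, hW, hR, hd⟩ := exists_QR K hK
  have hW' : Wᵀ * W = 1 := mul_eq_one_comm.mp hW
  set R := W * K with hRdef
  set T := W * diagonal ν * Wᵀ with hT
  have hTR : T * R = W * (diagonal ν * K) := by
    rw [hT, hRdef]
    calc W * diagonal ν * Wᵀ * (W * K) = W * diagonal ν * (Wᵀ * W) * K := by
          simp only [Matrix.mul_assoc]
      _ = _ := by rw [hW']; simp only [Matrix.mul_assoc, Matrix.one_mul]
  have hshift : ∀ i j j' : Fin M, j.val + 1 = j'.val → ∑ l, T i l * R l j = R i j' := by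
    intro i j j' h
    have := congrFun (congrFun hTR i) j
    rw [Matrix.mul_apply] at this
    rw [this, hRdef, Matrix.mul_apply, Matrix.mul_apply]
    refine Finset.sum_congr rfl fun k _ => ?_
    rw [diagonal_mul, hKa, hKa, ← h, pow_succ]
    ring
  have hlow : ∀ n : ℕ, ∀ i j : Fin M, j.val = n → j.val + 1 < i.val → T i j = 0 := by
    intro n
    induction n using Nat.strong_induction_on with
    | _ n ih =>
      intro i j hj hij
      have h1 := hshift i j ⟨j.val + 1, by omega⟩ rfl
      rw [Finset.sum_eq_single j] at h1
      · rw [hR i ⟨j.val + 1, by omega⟩ (by simpa [Fin.lt_def] using hij)] at h1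
        exact (mul_eq_zero.mp h1).resolve_right (hd j)
      · intro l _ hl
        rcases lt_or_gt_of_ne hl with h | h
        · rw [ih l.val (by rw [← hj]; exact h) i l rfl (by have : l.val < j.val := h; omega),
            zero_mul]
        · rw [hR l j h, mul_zero]
      · simp
  refine ⟨W, hW, fun i j h => hlow _ i j rfl h, ?_, ?_, ?_⟩
  · intro i j hij h0
    change T i j = 0 at h0
    have h1 := hshift i j i hij
    rw [Finset.sum_eq_single j] at h1
    · rw [h0, zero_mul] at h1
      exact hd i h1.symm
    · intro l _ hl
      rcases lt_or_gt_of_ne hl with h | h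
      · rw [hlow _ i l rfl (by have : l.val < j.val := h; omega), zero_mul]
      · rw [hR l j h, mul_zero]
    · simp
  · intro i
    have hM : 0 < M := i.pos
    have : (W *ᵥ a) i = R i ⟨0, hM⟩ := by
      rw [hRdef, Matrix.mul_apply, mulVec, dotProduct]
      exact Finset.sum_congr rfl fun k _ => by rw [hKa]; simp
    rw [this]
    constructor
    · intro h
      by_contra h'
      exact h (hR _ _ (by rw [Fin.lt_def]; simp; omega))
    · intro h
      have : i = ⟨0, hM⟩ := Fin.ext h
      rw [← this]; exact hd i
  · intro b hb horth
    have key : ∀ j : Fin M, j.val + 1 < M → ∑ l, R l j * (W *ᵥ b) l = 0 := by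
      intro j hj
      have h1 : Rᵀ *ᵥ (W *ᵥ b) = Kᵀ *ᵥ b := by
        rw [hRdef, transpose_mul, mulVec_mulVec, Matrix.mul_assoc, hW', Matrix.mul_one]
      have h2 := congrFun h1 j
      simp only [mulVec, dotProduct, transpose_apply] at h2
      simp only [mulVec, dotProduct]
      rw [h2, ← horth j hj]
      exact Finset.sum_congr rfl fun k _ => by rw [hKa]; ring
    have hz : ∀ n : ℕ, ∀ j : Fin M, j.val = n → j.val + 1 < M → (W *ᵥ b) j = 0 := by
      intro n
      induction n using Nat.strong_induction_on with
      | _ n ih =>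
        intro j hj hjM
        have h1 := key j hjM
        rw [Finset.sum_eq_single j] at h1
        · exact (mul_eq_zero.mp h1).resolve_left (hd j)
        · intro l _ hl
          rcases lt_or_gt_of_ne hl with h | h
          · rw [ih l.val (by rw [← hj]; exact h) l rfl (by have : l.val < j.val := h; omega),
              mul_zero]
          · rw [hR l j h, zero_mul]
        · simp
    intro i
    constructor
    · intro h
      by_contra h'
      exact h (hz _ i rfl (by omega))
    · intro h h0
      apply hb
      have : W *ᵥ b = 0 := by
        ext j
        by_cases hj : j.val + 1 < M
        · exact hz _ j rfl hj
        · have : j = i := Fin.ext (by omega)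
          rw [this, h0]; rfl
      calc b = Wᵀ *ᵥ (W *ᵥ b) := by rw [mulVec_mulVec, hW', one_mulVec]
        _ = 0 := by rw [this, mulVec_zero]

section perturb
open Topology

variable {h : ℕ}

open Classical in
/-- The zero-one matrix of a graph. -/
noncomputable def adjM (H : SimpleGraph (Fin h)) : Matrix (Fin h) (Fin h) ℝ :=
  Matrix.of fun i j => if H.Adj i j then 1 else 0

/-- The perturbed matrix. -/
noncomputable def pertB (β : Fin h → ℝ) (H : SimpleGraph (Fin h)) (p : (Fin h → ℝ) × ℝ) :
    Matrix (Fin h) (Fin h) ℝ := diagonal (β + p.1) + p.2 • adjM H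

/-- The map to which the inverse function theorem is applied. -/
noncomputable def pertG (β : Fin h → ℝ) (H : SimpleGraph (Fin h)) (p : (Fin h → ℝ) × ℝ) :
    (Fin h → ℝ) × ℝ := (fun k => (diagonal (fun _ => β k) - pertB β H p).det, p.2)

lemma pertB_symm (β : Fin h → ℝ) (H : SimpleGraph (Fin h)) (p : (Fin h → ℝ) × ℝ) :
    (pertB β H p)ᵀ = pertB β H p := by
  ext i j
  simp only [pertB, adjM, transpose_apply, Matrix.add_apply, Matrix.smul_apply, of_apply,
    diagonal_apply]
  by_cases hij : i = j
  · subst hij; simp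
  · by_cases ha : H.Adj i j
    · simp [hij, Ne.symm hij, ha, ha.symm]
    · have hb : ¬ H.Adj j i := fun e => ha e.symm
      simp [hij, Ne.symm hij, ha, hb]

lemma pertB_entry_contDiff (β : Fin h → ℝ) (H : SimpleGraph (Fin h)) (k i j : Fin h) :
    ContDiff ℝ 1 (fun p : (Fin h → ℝ) × ℝ => ((diagonal (fun _ => β k) - pertB β H p : Matrix (Fin h) (Fin h) ℝ) i j)) := by
  simp only [pertB, Matrix.sub_apply, Matrix.add_apply, Matrix.smul_apply, diagonal_apply,
    smul_eq_mul, Pi.add_apply]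
  by_cases hij : i = j
  · simp only [hij, if_true]; fun_prop
  · simp only [hij, if_false]; fun_prop

lemma pertG_contDiff (β : Fin h → ℝ) (H : SimpleGraph (Fin h)) :
    ContDiff ℝ 1 (pertG β H) := by
  unfold pertG
  refine ContDiff.prodMk (contDiff_pi.mpr fun k => ?_) contDiff_snd
  simp only [det_apply']
  refine ContDiff.sum fun σ _ => ContDiff.mul contDiff_const ?_
  exact contDiff_prod fun i _ => pertB_entry_contDiff β H k (σ i) i

lemma pertB_continuous (β : Fin h → ℝ) (H : SimpleGraph (Fin h)) (k : Fin h) :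
    Continuous (fun p => diagonal (fun _ => β k) - pertB β H p) := by
  refine continuous_matrix fun i j => (pertB_entry_contDiff β H k i j).continuous

lemma pertG_line (β : Fin h → ℝ) (H : SimpleGraph (Fin h)) (j : Fin h) (t : ℝ) :
    pertG β H (t • (Pi.single j 1, 0)) =
      t • (Pi.single j (-∏ l ∈ Finset.univ.erase j, (β j - β l)), 0) := by
  have hB : ∀ k, diagonal (fun _ => β k) - pertB β H (t • (Pi.single j 1, 0)) =
      diagonal (fun l => β k - β l - t * (Pi.single j 1 : Fin h → ℝ) l) := by
    intro k
    ext a b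
    simp only [pertB, Matrix.sub_apply, Matrix.add_apply, Matrix.smul_apply, diagonal_apply]
    by_cases hab : a = b
    · simp [hab]; ring
    · simp [hab]
  unfold pertG
  simp only [hB, det_diagonal]
  ext k
  · simp only [Prod.smul_fst, Pi.smul_apply, smul_eq_mul]
    by_cases hk : k = j
    · subst hk
      rw [← Finset.mul_prod_erase _ _ (Finset.mem_univ k)]
      simp only [sub_self, Pi.single_eq_same]
      rw [Finset.prod_congr rfl (g := fun l => β k - β l)]
      · ring
      · intro l hl
        simp [Pi.single_apply, (Finset.mem_erase.mp hl).1]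
    · rw [Finset.prod_eq_zero (Finset.mem_univ k)]
      · simp [Pi.single_apply, hk]
      · simp [Pi.single_apply, hk]
  · simp

lemma pertG_surj (β : Fin h → ℝ) (hβ : Function.Injective β) (H : SimpleGraph (Fin h)) :
    (fderiv ℝ (pertG β H) 0).range = ⊤ := by
  have hG : HasFDerivAt (pertG β H) (fderiv ℝ (pertG β H) 0) 0 :=
    ((pertG_contDiff β H).differentiable one_ne_zero 0).hasFDerivAt
  set L := fderiv ℝ (pertG β H) 0 with hL
  have hω : ∀ j, ∏ l ∈ Finset.univ.erase j, (β j - β l) ≠ 0 := fun j =>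
    Finset.prod_ne_zero_iff.mpr fun l hl =>
      sub_ne_zero.mpr fun e => (Finset.mem_erase.mp hl).1 (hβ e).symm
  have h1 : ∀ j, L (Pi.single j 1, 0) =
      (Pi.single j (-∏ l ∈ Finset.univ.erase j, (β j - β l)), 0) := by
    intro j
    have hl : HasDerivAt (fun t : ℝ => t • ((Pi.single j 1, 0) : (Fin h → ℝ) × ℝ))
        (Pi.single j 1, 0) 0 := by
      simpa using (hasDerivAt_id (0:ℝ)).smul_const ((Pi.single j 1, 0) : (Fin h → ℝ) × ℝ)
    have hr : HasDerivAt (fun t : ℝ => t •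
        ((Pi.single j (-∏ l ∈ Finset.univ.erase j, (β j - β l)), 0) : (Fin h → ℝ) × ℝ))
        (Pi.single j (-∏ l ∈ Finset.univ.erase j, (β j - β l)), 0) 0 := by
      simpa using (hasDerivAt_id (0:ℝ)).smul_const
        ((Pi.single j (-∏ l ∈ Finset.univ.erase j, (β j - β l)), 0) : (Fin h → ℝ) × ℝ)
    have hG' : HasFDerivAt (pertG β H) L
        ((fun t : ℝ => t • ((Pi.single j 1, 0) : (Fin h → ℝ) × ℝ)) 0) := by
      simpa using hG
    have hc := hG'.comp_hasDerivAt (0:ℝ) hl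
    have : (pertG β H ∘ fun t : ℝ => t • ((Pi.single j 1, 0) : (Fin h → ℝ) × ℝ)) =
        fun t : ℝ => t •
        ((Pi.single j (-∏ l ∈ Finset.univ.erase j, (β j - β l)), 0) : (Fin h → ℝ) × ℝ) :=
      funext fun t => pertG_line β H j t
    rw [this] at hc
    exact hc.unique hr
  have h2 : ∀ v, (L v).2 = v.2 := by
    intro v
    have hs : HasFDerivAt (fun p => (pertG β H p).2)
        ((ContinuousLinearMap.snd ℝ (Fin h → ℝ) ℝ).comp L) 0 :=
      HasFDerivAt.comp (g := fun q : (Fin h → ℝ) × ℝ => q.2) 0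
        (ContinuousLinearMap.snd ℝ (Fin h → ℝ) ℝ).hasFDerivAt hG
    have hs' : HasFDerivAt (fun p => (pertG β H p).2)
        (ContinuousLinearMap.snd ℝ (Fin h → ℝ) ℝ) 0 :=
      (ContinuousLinearMap.snd ℝ (Fin h → ℝ) ℝ).hasFDerivAt
    have := congrArg (fun l => l v) (hs.unique hs')
    simpa using this
  have h3 : ∀ y : Fin h → ℝ, ((y, 0) : (Fin h → ℝ) × ℝ) ∈ L.range := by
    intro y
    have hy : ((y, 0) : (Fin h → ℝ) × ℝ) = ∑ j, (-(y j) / ∏ l ∈ Finset.univ.erase j, (β j - β l)) •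
        L (Pi.single j 1, 0) := by
      simp only [h1]
      ext k
      · simp only [Prod.fst_sum, Finset.sum_apply, Prod.smul_fst, Pi.smul_apply, smul_eq_mul]
        rw [Finset.sum_eq_single k]
        · simp only [Pi.single_eq_same]
          have := hω k
          field_simp
        · intro j _ hj
          simp [Pi.single_apply, hj.symm]
        · simp
      · simp [Prod.snd_sum]
    rw [hy]
    exact Submodule.sum_mem _ fun j _ => Submodule.smul_mem _ _ ⟨_, rfl⟩
  rw [eq_top_iff]
  rintro ⟨y, c⟩ -
  have : ((y, c) : (Fin h → ℝ) × ℝ) = (y - (L (0, c)).1, 0) + L (0, c) := by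
    ext k
    · simp
    · simp [h2]
  rw [this]
  exact Submodule.add_mem _ (h3 _) ⟨_, rfl⟩

lemma pert_exists (β : Fin h → ℝ) (hβ : Function.Injective β) (H : SimpleGraph (Fin h))
    (P : (Fin h → ℝ) × ℝ → Prop) (hP : ∀ᶠ p in 𝓝 0, P p) :
    ∃ p, P p ∧ p.2 ≠ 0 ∧ ∀ k, (diagonal (fun _ => β k) - pertB β H p).det = 0 := by
  have hs : HasStrictFDerivAt (pertG β H) (fderiv ℝ (pertG β H) 0) 0 :=
    (pertG_contDiff β H).contDiffAt.hasStrictFDerivAt one_ne_zero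
  have hmap := hs.map_nhds_eq_of_surj (pertG_surj β hβ H)
  have h0 : pertG β H 0 = 0 := by
    ext k
    · simp only [pertG, pertB, Prod.fst_zero, add_zero, Prod.snd_zero, zero_smul]
      rw [diagonal_sub, det_diagonal]
      exact Finset.prod_eq_zero (Finset.mem_univ k) (sub_self _)
    · simp [pertG]
  rw [h0] at hmap
  have hmem : Set.image (pertG β H) {p | P p} ∈ 𝓝 (0 : (Fin h → ℝ) × ℝ) := by
    rw [← hmap]; exact image_mem_map hP
  have hc : Tendsto (fun ε : ℝ => ((0, ε) : (Fin h → ℝ) × ℝ)) (𝓝 0) (𝓝 0) := by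
    have : Continuous (fun ε : ℝ => ((0, ε) : (Fin h → ℝ) × ℝ)) := by fun_prop
    exact this.tendsto 0
  have hev := (hc.eventually hmem).filter_mono (nhdsWithin_le_nhds (s := {0}ᶜ))
  obtain ⟨ε, hε, hε0⟩ := (hev.and self_mem_nhdsWithin).exists
  obtain ⟨p, hp, hpe⟩ := hε
  have hp1 := congrArg Prod.fst hpe
  have hp2 := congrArg Prod.snd hpe
  refine ⟨p, hp, ?_, fun k => congrFun hp1 k⟩
  have : p.2 = ε := hp2
  rw [this]; exact hε0

lemma perturb (β : Fin h → ℝ) (hβ : Function.Injective β) (H : SimpleGraph (Fin h))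
    (f g : Fin h → ℝ) (hf : ∀ i, f i ≠ 0) (hg : ∀ i, g i ≠ 0) :
    ∃ Q : Matrix (Fin h) (Fin h) ℝ, Q * Qᵀ = 1 ∧ inS H (Q * diagonal β * Qᵀ) ∧
      ∀ i, (Q *ᵥ f) i ≠ 0 ∧ (Q *ᵥ g) i ≠ 0 := by
  let Y : (Fin h → ℝ) × ℝ → Fin h → Fin h → ℝ := fun p k i =>
    (diagonal (fun _ => β k) - pertB β H p).adjugate i k
  let nr : (Fin h → ℝ) × ℝ → Fin h → ℝ := fun p k => √(∑ i, Y p k i ^ 2)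
  let U : (Fin h → ℝ) × ℝ → Matrix (Fin h) (Fin h) ℝ := fun p => of fun i k => Y p k i / nr p k
  have hω : ∀ j, ∏ l ∈ Finset.univ.erase j, (β j - β l) ≠ 0 := fun j =>
    Finset.prod_ne_zero_iff.mpr fun l hl =>
      sub_ne_zero.mpr fun e => (Finset.mem_erase.mp hl).1 (hβ e).symm
  have hYc : ∀ k i, Continuous fun p => Y p k i := fun k i =>
    ((pertB_continuous β H k).matrix_adjugate).matrix_elem i k
  have hnc : ∀ k, Continuous fun p => nr p k := fun k =>
    Real.continuous_sqrt.comp (continuous_finsetSum _ fun i _ => (hYc k i).pow 2)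
  have hY0 : ∀ k i, Y 0 k i = if i = k then ∏ l ∈ Finset.univ.erase k, (β k - β l) else 0 := by
    intro k i
    simp only [Y, pertB, Prod.fst_zero, add_zero, Prod.snd_zero, zero_smul]
    rw [diagonal_sub, adjugate_diagonal, diagonal_apply]
    split_ifs with hik
    · subst hik; rfl
    · rfl
  have hn0 : ∀ k, nr 0 k ≠ 0 := by
    intro k
    have : ∑ i, Y 0 k i ^ 2 = (∏ l ∈ Finset.univ.erase k, (β k - β l)) ^ 2 := by
      rw [Finset.sum_eq_single k]
      · simp [hY0]
      · intro i _ hi; simp [hY0, hi]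
      · simp
    simp only [nr, this]
    exact (Real.sqrt_pos.mpr (by have := hω k; positivity)).ne'
  have hUf : ∀ v : Fin h → ℝ, (∀ i, v i ≠ 0) → ∀ᶠ p in 𝓝 0, ∀ i, (U p *ᵥ v) i ≠ 0 := by
    intro v hv
    rw [eventually_all]
    intro i
    have hc : ContinuousAt (fun p => (U p *ᵥ v) i) 0 := by
      simp only [mulVec, dotProduct, U, of_apply]
      refine tendsto_finsetSum _ fun k _ => ?_
      exact (((hYc k i).continuousAt.div (hnc k).continuousAt (hn0 k)).mul continuousAt_const)
    refine hc.eventually_ne ?_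
    simp only [mulVec, dotProduct, U, of_apply]
    rw [Finset.sum_eq_single i]
    · rw [hY0, if_pos rfl]
      exact mul_ne_zero (div_ne_zero (hω i) (hn0 i)) (hv i)
    · intro k _ hk; simp [hY0, hk.symm]
    · simp
  have hev : ∀ᶠ p in 𝓝 0, (∀ k, nr p k ≠ 0) ∧ (∀ i, (U p *ᵥ f) i ≠ 0) ∧
      (∀ i, (U p *ᵥ g) i ≠ 0) :=
    (eventually_all.mpr fun k => (hnc k).continuousAt.eventually_ne (hn0 k)).and
      ((hUf f hf).and (hUf g hg))
  obtain ⟨p, ⟨hn, h1, h2⟩, hε, hdet⟩ := pert_exists β hβ H _ hev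
  set B := pertB β H p with hB
  have hBs : Bᵀ = B := pertB_symm β H p
  have heig : ∀ k, B *ᵥ (Y p k) = β k • Y p k := by
    intro k
    have hm := mul_adjugate (diagonal (fun _ => β k) - B)
    rw [hdet k, zero_smul, Matrix.sub_mul] at hm
    have hm' := sub_eq_zero.mp hm
    ext i
    have := congrFun (congrFun hm' i) k
    rw [diagonal_mul, Matrix.mul_apply] at this
    simp only [mulVec, dotProduct, Pi.smul_apply, smul_eq_mul, Y]
    exact this.symm
  have hBU : B * U p = U p * diagonal β := by
    ext i k
    have := congrFun (heig k) i
    simp only [mulVec, dotProduct, Pi.smul_apply, smul_eq_mul] at this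
    rw [mul_diagonal, Matrix.mul_apply]
    simp only [U, of_apply]
    rw [div_mul_eq_mul_div, mul_comm (Y p k i), ← this, Finset.sum_div]
    exact Finset.sum_congr rfl fun _ _ => by ring
  have horth : ∀ k l, k ≠ l → Y p k ⬝ᵥ Y p l = 0 := by
    intro k l hkl
    have e1 : Y p k ⬝ᵥ (B *ᵥ Y p l) = (B *ᵥ Y p k) ⬝ᵥ Y p l := by
      rw [dotProduct_mulVec, ← mulVec_transpose, hBs]
    rw [heig, heig, dotProduct_smul, smul_dotProduct, smul_eq_mul, smul_eq_mul] at e1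
    have : (β l - β k) * (Y p k ⬝ᵥ Y p l) = 0 := by linarith
    exact (mul_eq_zero.mp this).resolve_left (sub_ne_zero.mpr fun e => hkl (hβ e).symm)
  have hUU : (U p)ᵀ * U p = 1 := by
    ext k l
    rw [Matrix.mul_apply, one_apply]
    simp only [transpose_apply, U, of_apply]
    have : ∑ i, Y p k i / nr p k * (Y p l i / nr p l) = (Y p k ⬝ᵥ Y p l) / (nr p k * nr p l) := by
      rw [dotProduct, Finset.sum_div]
      exact Finset.sum_congr rfl fun _ _ => by ring
    rw [this]
    split_ifs with hkl
    · subst hkl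
      have : Y p k ⬝ᵥ Y p k = nr p k * nr p k := by
        simp only [nr]
        rw [Real.mul_self_sqrt (Finset.sum_nonneg fun _ _ => sq_nonneg _), dotProduct]
        exact Finset.sum_congr rfl fun _ _ => by ring
      rw [this, div_self (mul_ne_zero (hn k) (hn k))]
    · rw [horth k l hkl, zero_div]
  have hUU' : U p * (U p)ᵀ = 1 := mul_eq_one_comm.mp hUU
  refine ⟨U p, hUU', ?_, fun i => ⟨h1 i, h2 i⟩⟩
  rw [← hBU, Matrix.mul_assoc, hUU', Matrix.mul_one]
  refine ⟨hBs, fun i j hij => ?_⟩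
  simp only [hB, pertB, adjM, Matrix.add_apply, Matrix.smul_apply, of_apply, diagonal_apply_ne _ hij,
    zero_add, smul_eq_mul]
  by_cases ha : H.Adj i j <;> simp [ha, hε]

end perturb

section bordered
open Polynomial

/-- Nodal products. -/
noncomputable def om {M : ℕ} (ν : Fin M → ℝ) (k : Fin M) : ℝ :=
  ∏ j ∈ Finset.univ.erase k, (ν k - ν j)

lemma om_ne_zero {M : ℕ} {ν : Fin M → ℝ} (hν : Function.Injective ν) (k : Fin M) : om ν k ≠ 0 :=
  Finset.prod_ne_zero_iff.mpr fun _ hl =>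
    sub_ne_zero.mpr fun e => (Finset.mem_erase.mp hl).1 (hν e).symm

lemma sum_om {M : ℕ} {ν : Fin M → ℝ} (hν : Function.Injective ν) (j : ℕ) (hj : j + 1 < M) :
    ∑ k, ν k ^ j / om ν k = 0 := by
  have := Lagrange.coeff_eq_sum (s := Finset.univ) (v := ν) (P := (X : ℝ[X]) ^ j) hν.injOn
    (by rw [degree_X_pow]; simp; omega)
  simp only [eval_pow, eval_X] at this
  unfold om
  rw [← this, coeff_X_pow, if_neg]
  simp; omega

/-- The bordered diagonal matrix. -/
def bord {M : ℕ} (d : ℝ) (c ν : Fin M → ℝ) : Matrix (Fin 1 ⊕ Fin M) (Fin 1 ⊕ Fin M) ℝ :=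
  fromBlocks (of fun _ _ => d) (of fun _ k => c k) (of fun k _ => c k) (diagonal ν)

lemma bordered_charpoly {M : ℕ} (ν c : Fin M → ℝ) (hν : Function.Injective ν) (p : ℝ[X])
    (hp : p.Monic) (hdeg : p.natDegree = M + 1) (hc : ∀ k, c k ^ 2 = - p.eval (ν k) / om ν k) :
    ∃ d, (bord d c ν).charpoly = p := by
  set Ω := Lagrange.nodal Finset.univ ν with hΩ
  have hΩm : Ω.Monic := Lagrange.nodal_monic
  have hΩd : Ω.natDegree = M := by rw [hΩ, Lagrange.natDegree_nodal]; simp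
  have hle : Ω.degree ≤ p.degree := by
    rw [degree_eq_natDegree hΩm.ne_zero, degree_eq_natDegree hp.ne_zero, hΩd, hdeg]
    exact_mod_cast Nat.le_succ M
  have hqm : (p /ₘ Ω).Monic := by
    rw [Monic, leadingCoeff_divByMonic_of_monic hΩm hle]; exact hp
  have hqd : (p /ₘ Ω).natDegree = 1 := by
    rw [natDegree_divByMonic _ hΩm, hdeg, hΩd]; omega
  have hq := hqm.eq_X_add_C hqd
  have hdm := modByMonic_add_div p Ω
  have hr : p %ₘ Ω = Lagrange.interpolate Finset.univ ν (fun k => p.eval (ν k)) := by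
    refine Lagrange.eq_interpolate_of_eval_eq _ hν.injOn ?_ ?_
    · have := degree_modByMonic_lt p hΩm
      rw [degree_eq_natDegree hΩm.ne_zero, hΩd] at this
      simpa using this
    · intro i hi
      have h1 := congrArg (eval (ν i)) hdm
      rw [eval_add, eval_mul, hΩ, Lagrange.eval_nodal_at_node hi, zero_mul, add_zero] at h1
      exact h1
  set d := -(p /ₘ Ω).coeff 0 with hd
  refine ⟨d, ?_⟩
  refine Polynomial.eq_of_infinite_eval_eq _ _ ?_
  refine Set.Infinite.mono (s := (Set.range ν)ᶜ) ?_ (Set.finite_range ν).infinite_compl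
  intro z hz
  have hz' : ∀ k, z - ν k ≠ 0 := fun k => sub_ne_zero.mpr fun e => hz ⟨k, e.symm⟩
  have hz'' : ∀ k ∈ Finset.univ, z ≠ ν k := fun k _ => sub_ne_zero.mp (hz' k)
  change eval z (bord d c ν).charpoly = eval z p
  rw [eval_charpoly]
  have hblk : scalar (Fin 1 ⊕ Fin M) z - bord d c ν = fromBlocks (of fun _ _ => z - d)
      (of fun _ k => -c k) (of fun k _ => -c k) (diagonal fun k => z - ν k) := by
    ext i j
    rcases i with i | i <;> rcases j with j | j
    · simp [bord, Subsingleton.elim i j]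
    · simp [bord]
    · simp [bord]
    · by_cases hij : i = j
      · simp [bord, hij]
      · simp [bord, hij]
  rw [hblk]
  let _ : Invertible (diagonal fun k => z - ν k) :=
    ⟨diagonal fun k => (z - ν k)⁻¹, by
      rw [diagonal_mul_diagonal, ← diagonal_one]; congr 1; ext k; exact inv_mul_cancel₀ (hz' k), by
      rw [diagonal_mul_diagonal, ← diagonal_one]; congr 1; ext k; exact mul_inv_cancel₀ (hz' k)⟩
  have hinv : ⅟(diagonal fun k => z - ν k) = diagonal fun k => (z - ν k)⁻¹ := rfl
  rw [det_fromBlocks₂₂, hinv, det_diagonal, det_fin_one]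
  rw [← hdm, eval_add, eval_mul, hr, hΩ, Lagrange.eval_interpolate_not_at_node _ hz'', ← hΩ, hq,
    eval_add, eval_X, eval_C, hΩ, Lagrange.eval_nodal]
  rw [← mul_add]
  congr 1
  rw [Matrix.sub_apply, Matrix.mul_apply]
  simp only [mul_diagonal, of_apply]
  have : (p /ₘ Lagrange.nodal Finset.univ ν).coeff 0 = -d := by rw [hd, neg_neg]
  rw [this]
  have hs : ∑ x, -c x * (z - ν x)⁻¹ * -c x = - ∑ i, Lagrange.nodalWeight Finset.univ ν i *
      (z - ν i)⁻¹ * eval (ν i) p := by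
    rw [← Finset.sum_neg_distrib]
    refine Finset.sum_congr rfl fun k _ => ?_
    have h1 : Lagrange.nodalWeight Finset.univ ν k = (om ν k)⁻¹ := by
      rw [Lagrange.nodalWeight, om, Finset.prod_inv_distrib]
    rw [h1]
    have := hc k
    calc -c k * (z - ν k)⁻¹ * -c k = c k ^ 2 * (z - ν k)⁻¹ := by ring
      _ = _ := by rw [this]; ring
  rw [hs]
  ring

/-- Solving for the two end vectors. -/
lemma split_exists {M : ℕ} (ν c : Fin M → ℝ) (hν : Function.Injective ν) (σ : ℝ) (hσ0 : σ ≠ 0)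
    (hσ : ∀ k, c k = 0 → σ * om ν k < 0) :
    ∃ (t : ℝ) (a : Fin M → ℝ), t ≠ 0 ∧ (∀ k, a k ≠ 0) ∧ ∀ k, c k = a k + t / (a k * om ν k) := by
  have hev : ∀ᶠ ε in nhdsWithin (0:ℝ) (Set.Ioi 0), ∀ k, 0 ≤ c k ^ 2 - 4 * (σ * ε) / om ν k := by
    rw [eventually_all]
    intro k
    by_cases hk : c k = 0
    · filter_upwards [self_mem_nhdsWithin] with ε hε
      have hε' : 0 < ε := hε
      have : 0 ≤ - (σ * om ν k) * ε / (om ν k) ^ 2 := by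
        have := hσ k hk
        apply div_nonneg _ (sq_nonneg _)
        apply mul_nonneg _ hε'.le
        linarith
      have e : c k ^ 2 - 4 * (σ * ε) / om ν k = 4 * (- (σ * om ν k) * ε / (om ν k) ^ 2) := by
        have := om_ne_zero hν k
        rw [hk]; field_simp; ring
      rw [e]; linarith
    · have hcont : ContinuousAt (fun ε : ℝ => c k ^ 2 - 4 * (σ * ε) / om ν k) 0 := by fun_prop
      have : ∀ᶠ ε in nhds (0:ℝ), 0 < c k ^ 2 - 4 * (σ * ε) / om ν k := by
        apply hcont.eventually_const_lt
        simp only [mul_zero, zero_div, sub_zero]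
        positivity
      exact (this.filter_mono nhdsWithin_le_nhds).mono fun _ h => h.le
  obtain ⟨ε, hε, hε0⟩ := (hev.and self_mem_nhdsWithin).exists
  have hε0' : ε ≠ 0 := ne_of_gt hε0
  have ht : σ * ε ≠ 0 := mul_ne_zero hσ0 hε0'
  have hquad : ∀ k, ∃ x : ℝ, x ^ 2 - c k * x + σ * ε / om ν k = 0 := by
    intro k
    refine ⟨(c k + √(c k ^ 2 - 4 * (σ * ε) / om ν k)) / 2, ?_⟩
    have := Real.sq_sqrt (hε k)
    set r := √(c k ^ 2 - 4 * (σ * ε) / om ν k)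
    have e : ((c k + r) / 2) ^ 2 - c k * ((c k + r) / 2) + σ * ε / om ν k =
      (r ^ 2 - (c k ^ 2 - 4 * (σ * ε) / om ν k)) / 4 := by ring
    rw [e, this]; ring
  choose a ha using hquad
  have ha0 : ∀ k, a k ≠ 0 := by
    intro k h0
    have := ha k
    rw [h0] at this
    have h2 : σ * ε / om ν k = 0 := by linarith
    exact (div_ne_zero ht (om_ne_zero hν k)) h2
  refine ⟨σ * ε, a, ht, ha0, fun k => ?_⟩
  have := ha k
  have h1 := ha0 k
  have h2 := om_ne_zero hν k
  field_simp at this ⊢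
  linarith

/-- Equally spaced nodes. -/
noncomputable def nu (M : ℕ) : Fin M → ℝ := fun k => (k.val : ℝ)

lemma nu_inj (M : ℕ) : Function.Injective (nu M) := fun a b h => by
  simpa [nu, Fin.ext_iff] using h

lemma sgn_om (M : ℕ) (k : Fin M) : 0 < (-1) ^ (M - 1 - k.val) * om (nu M) k := by
  have h1 : ∏ j ∈ Finset.univ.erase k, (if k < j then (-1:ℝ) else 1) = (-1) ^ (M - 1 - k.val) := by
    rw [Finset.prod_ite, Finset.prod_const, Finset.prod_const_one, mul_one]
    congr 1
    rw [← Fin.card_Ioi]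
    congr 1
    ext j
    simp only [Finset.mem_filter, Finset.mem_erase, Finset.mem_univ, and_true, Finset.mem_Ioi]
    exact ⟨fun h => h.2, fun h => ⟨h.ne', h⟩⟩
  rw [← h1, om, ← Finset.prod_mul_distrib]
  refine Finset.prod_pos fun j hj => ?_
  have hne := (Finset.mem_erase.mp hj).1
  simp only [nu]
  split_ifs with hlt
  · have : (k.val : ℝ) < j.val := by exact_mod_cast hlt
    linarith
  · have : j < k := lt_of_le_of_ne (not_lt.mp hlt) hne
    have : (j.val : ℝ) < k.val := by exact_mod_cast this
    linarith

/-- Double eigenvalues. -/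
noncomputable def lamF (s : ℕ) : Fin s → ℝ := fun i => 2 * (i.val : ℝ)
/-- Simple eigenvalues. -/
noncomputable def muF (s r : ℕ) : Fin r → ℝ := fun j => 2 * (s : ℝ) + j.val - 1 / 2

lemma half_ne (a b : ℤ) : (a : ℝ) ≠ b - 1 / 2 := by
  intro h
  have : (2 * a : ℝ) = 2 * b - 1 := by linarith
  have : (2 * a : ℤ) = 2 * b - 1 := by exact_mod_cast this
  omega

/-- The target spectrum. -/
noncomputable def specT (s r : ℕ) : Multiset ℝ :=
  2 • (Finset.univ.val.map (lamF s)) + Finset.univ.val.map (muF s r)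

/-- The target characteristic polynomial. -/
noncomputable def polT (s r : ℕ) : ℝ[X] := ((specT s r).map fun x => X - C x).prod

lemma polT_eval (s r : ℕ) (z : ℝ) :
    (polT s r).eval z = (∏ i, (z - lamF s i)) ^ 2 * ∏ j, (z - muF s r j) := by
  rw [polT, eval_multiset_prod, specT]
  simp [Multiset.map_nsmul, Multiset.prod_nsmul, Function.comp_def, List.prod_ofFn]

lemma polT_eval_nu (M s : ℕ) (hs : 2 * s ≤ M + 1) (k : Fin M) :
    ((polT s (M + 1 - 2 * s)).eval (nu M k) = 0 ∧ (-1) ^ M * om (nu M) k < 0) ∨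
    0 < -(polT s (M + 1 - 2 * s)).eval (nu M k) / om (nu M) k := by
  have hom := sgn_om M k
  have hk := k.isLt
  by_cases h0 : ∃ i : Fin s, k.val = 2 * i.val
  · left
    obtain ⟨i, hi⟩ := h0
    constructor
    · rw [polT_eval, Finset.prod_eq_zero (Finset.mem_univ i)]
      · simp
      · simp [nu, lamF, hi]
    · have : ((-1:ℝ)) ^ (M - 1 - k.val) = - (-1) ^ M := by
        obtain ⟨q, rfl⟩ : ∃ q, M = q + 1 + 2 * i.val := ⟨M - 1 - 2 * i.val, by omega⟩
        rw [hi, show q + 1 + 2 * i.val - 1 - 2 * i.val = q by omega, pow_add, pow_mul, pow_succ]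
        simp
      rw [this] at hom
      linarith
  · right
    have hsq : 0 < (∏ i, (nu M k - lamF s i)) ^ 2 := by
      have : ∏ i, (nu M k - lamF s i) ≠ 0 := by
        refine Finset.prod_ne_zero_iff.mpr fun i _ h => h0 ⟨i, ?_⟩
        simp only [nu, lamF] at h
        have : (k.val : ℝ) = 2 * i.val := by linarith
        exact_mod_cast this
      positivity
    have hsgn : 0 < (-1) ^ (M - k.val) * ∏ j, (nu M k - muF s (M + 1 - 2 * s) j) := by
      have h1 : ∏ j : Fin (M + 1 - 2 * s), (if k.val < 2 * s + j.val then (-1:ℝ) else 1) =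
          (-1) ^ (M - k.val) := by
        rw [Finset.prod_ite, Finset.prod_const, Finset.prod_const_one, mul_one]
        by_cases hks : k.val < 2 * s
        · have hodd : k.val % 2 = 1 := by
            by_contra hne
            exact h0 ⟨⟨k.val / 2, by omega⟩, by simp; omega⟩
          rw [Finset.filter_true_of_mem (fun j _ => by omega)]
          simp only [Finset.card_univ, Fintype.card_fin]
          obtain ⟨q, hq⟩ : ∃ q, k.val = 2 * q + 1 := ⟨k.val / 2, by omega⟩
          have e1 : ((-1:ℝ)) ^ (M + 1 - 2 * s) = (-1) ^ (M + 1) := by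
            conv_rhs => rw [show M + 1 = (M + 1 - 2 * s) + 2 * s by omega, pow_add, pow_mul]
            simp
          have e2 : ((-1:ℝ)) ^ (M - k.val) = (-1) ^ (M + 1) := by
            conv_rhs => rw [show M + 1 = (M - k.val) + 2 * (q + 1) by omega, pow_add, pow_mul]
            simp
          rw [e1, e2]
        · congr 1
          have : (Finset.univ.filter fun j : Fin (M + 1 - 2 * s) => k.val < 2 * s + j.val) =
              Finset.Ioi ⟨k.val - 2 * s, by omega⟩ := by
            ext j
            simp only [Finset.mem_filter, Finset.mem_univ, true_and, Finset.mem_Ioi, Fin.lt_def]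
            omega
          rw [this, Fin.card_Ioi]
          simp only
          omega
      rw [← h1, ← Finset.prod_mul_distrib]
      refine Finset.prod_pos fun j _ => ?_
      simp only [nu, muF]
      split_ifs with hlt
      · have : (k.val : ℝ) + 1 ≤ 2 * s + j.val := by exact_mod_cast hlt
        linarith
      · have : (2 * s + j.val : ℝ) ≤ k.val := by exact_mod_cast not_lt.mp hlt
        linarith
    have hsplit : ((-1:ℝ)) ^ (M - k.val) = - (-1) ^ (M - 1 - k.val) := by
      rw [show M - k.val = (M - 1 - k.val) + 1 by omega, pow_succ]; ring
    rw [hsplit] at hsgn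
    rw [polT_eval]
    rcases neg_one_pow_eq_or ℝ (M - 1 - k.val) with e | e
    · rw [e] at hom hsgn
      apply div_pos _ (by linarith)
      nlinarith
    · rw [e] at hom hsgn
      apply div_pos_of_neg_of_neg _ (by linarith)
      nlinarith

end bordered
section jacobi

lemma jac_first {h : ℕ} (hh : 0 < h) (B : Matrix (Fin h) (Fin h) ℝ)
    (hz : ∀ i j : Fin h, i.val + 1 < j.val → B i j = 0)
    (hnz : ∀ i j : Fin h, i.val + 1 = j.val → B i j ≠ 0) (x : Fin h → ℝ) (β : ℝ)
    (hx : B *ᵥ x = β • x) (h0 : x ⟨0, hh⟩ = 0) : x = 0 := by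
  have key : ∀ n : ℕ, ∀ i : Fin h, i.val = n → x i = 0 := by
    intro n
    induction n using Nat.strong_induction_on with
    | _ n ih =>
      intro i hi
      rcases Nat.eq_zero_or_pos n with hn0 | hn0
      · rw [← h0]; congr 1; exact Fin.ext (by simp; omega)
      · let i' : Fin h := ⟨n - 1, by omega⟩
        have hi' : i'.val = n - 1 := rfl
        have h1 := congrFun hx i'
        simp only [mulVec, dotProduct, Pi.smul_apply, smul_eq_mul] at h1
        rw [ih (n - 1) (by omega) i' rfl, mul_zero, Finset.sum_eq_single i] at h1
        · exact (mul_eq_zero.mp h1).resolve_left (hnz i' i (by omega))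
        · intro l _ hl
          rcases lt_or_gt_of_ne hl with hlt | hlt
          · rw [ih l.val (by rw [← hi]; exact hlt) l rfl, mul_zero]
          · have : i.val < l.val := hlt
            rw [hz i' l (by omega), zero_mul]
        · simp
  ext i
  exact key _ i rfl

lemma jac_last {h : ℕ} (hh : 0 < h) (B : Matrix (Fin h) (Fin h) ℝ) (hs : Bᵀ = B)
    (hz : ∀ i j : Fin h, i.val + 1 < j.val → B i j = 0)
    (hnz : ∀ i j : Fin h, i.val + 1 = j.val → B i j ≠ 0) (x : Fin h → ℝ) (β : ℝ)
    (hx : B *ᵥ x = β • x) (h0 : x ⟨h - 1, by omega⟩ = 0) : x = 0 := by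
  have hs' : ∀ i j, B i j = B j i := fun i j => by
    conv_lhs => rw [← hs]
    rfl
  have := jac_first hh (B.submatrix Fin.rev Fin.rev)
    (fun i j hij => by
      rw [submatrix_apply, hs']; apply hz; simp only [Fin.val_rev]; omega)
    (fun i j hij => by
      rw [submatrix_apply, hs']; apply hnz; simp only [Fin.val_rev]; omega)
    (fun i => x i.rev) β
    (by
      ext i
      have h1 := congrFun hx i.rev
      simp only [mulVec, dotProduct, Pi.smul_apply, smul_eq_mul, submatrix_apply] at h1 ⊢
      rw [← h1]
      exact Equiv.sum_comp Fin.revPerm (fun l => B i.rev l * x l))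
    (by
      change x (Fin.rev ⟨0, hh⟩) = 0
      rw [← h0]; congr 1)
  ext i
  have h1 := congrFun this i.rev
  simpa using h1

lemma jac_diag {h : ℕ} (hh : 0 < h) (B : Matrix (Fin h) (Fin h) ℝ) (hs : Bᵀ = B)
    (hz : ∀ i j : Fin h, i.val + 1 < j.val → B i j = 0)
    (hnz : ∀ i j : Fin h, i.val + 1 = j.val → B i j ≠ 0) :
    ∃ (V : Matrix (Fin h) (Fin h) ℝ) (β : Fin h → ℝ), V * Vᵀ = 1 ∧ B = V * diagonal β * Vᵀ ∧
      Function.Injective β ∧ (∀ k, V ⟨0, hh⟩ k ≠ 0) ∧ ∀ k, V ⟨h - 1, by omega⟩ k ≠ 0 := by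
  have hB : B.IsHermitian := by
    rw [IsHermitian, conjTranspose_eq_transpose_of_trivial, hs]
  let V : Matrix (Fin h) (Fin h) ℝ := (hB.eigenvectorUnitary : Matrix (Fin h) (Fin h) ℝ)
  let β := hB.eigenvalues
  have hVV : V * Vᵀ = 1 := by
    have := (Matrix.mem_unitaryGroup_iff).mp hB.eigenvectorUnitary.2
    rwa [star_eq_conjTranspose, conjTranspose_eq_transpose_of_trivial] at this
  have hVV' : Vᵀ * V = 1 := mul_eq_one_comm.mp hVV
  have heig : ∀ k, B *ᵥ (fun i => V i k) = β k • (fun i => V i k) := fun k =>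
    hB.mulVec_eigenvectorBasis k
  have hBV : B * V = V * diagonal β := by
    ext i k
    have := congrFun (heig k) i
    simp only [mulVec, dotProduct, Pi.smul_apply, smul_eq_mul] at this
    rw [mul_diagonal, Matrix.mul_apply, this, mul_comm]
  have hdot : ∀ k l, ∑ i, V i k * V i l = if k = l then 1 else 0 := by
    intro k l
    have := congrFun (congrFun hVV' k) l
    rwa [Matrix.mul_apply, one_apply] at this
  have hcol : ∀ k, (fun i => V i k) ≠ 0 := by
    intro k hk
    have h1 := hdot k k
    rw [Finset.sum_eq_zero (fun i _ => by have := congrFun hk i; simp at this; simp [this])] at h1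
    simp at h1
  have hfirst : ∀ k, V ⟨0, hh⟩ k ≠ 0 := fun k h0 => hcol k (jac_first hh B hz hnz _ _ (heig k) h0)
  refine ⟨V, β, hVV, ?_, ?_, hfirst,
    fun k h0 => hcol k (jac_last hh B hs hz hnz _ _ (heig k) h0)⟩
  · rw [← hBV, Matrix.mul_assoc, hVV, Matrix.mul_one]
  · intro k l hkl
    by_contra hne
    have h0 := jac_first hh B hz hnz
      (V ⟨0, hh⟩ l • (fun i => V i k) - V ⟨0, hh⟩ k • (fun i => V i l)) (β k)
      (by
        rw [mulVec_sub, mulVec_smul, mulVec_smul, heig, heig, ← hkl, smul_sub,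
          smul_comm (V ⟨0, hh⟩ l), smul_comm (V ⟨0, hh⟩ k)])
      (by simp [mul_comm])
    have h1 : ∑ i, V i k * (V ⟨0, hh⟩ l • (fun i => V i k) - V ⟨0, hh⟩ k • (fun i => V i l)) i = 0 := by
      rw [h0]; simp
    simp only [Pi.sub_apply, Pi.smul_apply, smul_eq_mul] at h1
    have h2 : V ⟨0, hh⟩ l * ∑ i, V i k * V i k - V ⟨0, hh⟩ k * ∑ i, V i k * V i l = 0 := by
      rw [← h1, Finset.mul_sum, Finset.mul_sum, ← Finset.sum_sub_distrib]
      exact Finset.sum_congr rfl fun _ _ => by ring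
    rw [hdot, hdot, if_pos rfl, if_neg hne] at h2
    exact hfirst l (by linarith)

end jacobi

section assemble
open Polynomial

lemma charpoly_conj {ι : Type*} [Fintype ι] [DecidableEq ι] (P A : Matrix ι ι ℝ)
    (hP : P * Pᵀ = 1) : (P * A * Pᵀ).charpoly = A.charpoly := by
  rw [Matrix.mul_assoc, charpoly_mul_comm, Matrix.mul_assoc, mul_eq_one_comm.mp hP, Matrix.mul_one]

lemma block_orth {m h : ℕ} (R : Matrix (Fin h) (Fin h) ℝ) (hR : R * Rᵀ = 1) :
    fromBlocks (1 : Matrix (Fin m) (Fin m) ℝ) 0 0 R *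
      (fromBlocks (1 : Matrix (Fin m) (Fin m) ℝ) 0 0 R)ᵀ = 1 := by
  rw [fromBlocks_transpose, fromBlocks_multiply]
  simp [hR]

lemma block_conj {m h : ℕ} (R : Matrix (Fin h) (Fin h) ℝ) (A : Matrix (Fin m) (Fin m) ℝ)
    (B : Matrix (Fin m) (Fin h) ℝ) (C : Matrix (Fin h) (Fin m) ℝ) (D : Matrix (Fin h) (Fin h) ℝ) :
    fromBlocks (1 : Matrix (Fin m) (Fin m) ℝ) 0 0 R * fromBlocks A B C D *
      (fromBlocks (1 : Matrix (Fin m) (Fin m) ℝ) 0 0 R)ᵀ =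
      fromBlocks A (B * Rᵀ) (R * C) (R * D * Rᵀ) := by
  rw [fromBlocks_transpose, fromBlocks_multiply, fromBlocks_multiply]
  simp

lemma polT_monic (s r : ℕ) : (polT s r).Monic :=
  monic_multiset_prod_of_monic _ _ fun _ _ => monic_X_sub_C _

lemma polT_natDegree (s r : ℕ) : (polT s r).natDegree = 2 * s + r := by
  rw [polT, natDegree_multiset_prod_X_sub_C_eq_card, specT]
  simp

/-- A cycle matrix with the prescribed characteristic polynomial. -/
lemma cycle_exists (N s : ℕ) (hN : 3 ≤ N) (hs : 2 * s ≤ N) :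
    ∃ C : Matrix (Fin N) (Fin N) ℝ, Cᵀ = C ∧
      (∀ i j : Fin N, i < j → (C i j ≠ 0 ↔ i.val + 1 = j.val ∨ (i.val = 0 ∧ j.val + 1 = N))) ∧
      C.charpoly = polT s (N - 2 * s) := by
  obtain ⟨M, rfl⟩ : ∃ M, N = 1 + M := ⟨N - 1, by omega⟩
  have hpos := polT_eval_nu M s (by omega)
  rw [add_comm M 1] at hpos
  set p := polT s (1 + M - 2 * s) with hp
  have hν := nu_inj M
  set ν := nu M with hνdef
  let c : Fin M → ℝ := fun k => √(-p.eval (ν k) / om ν k)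
  have hc : ∀ k, c k ^ 2 = -p.eval (ν k) / om ν k := by
    intro k
    apply Real.sq_sqrt
    rcases hpos k with h | h
    · rw [h.1]; simp
    · exact h.le
  obtain ⟨d, hd⟩ := bordered_charpoly ν c hν p (polT_monic _ _)
    (by rw [hp, polT_natDegree]; omega) hc
  obtain ⟨t, a, ht, ha, hca⟩ := split_exists ν c hν ((-1) ^ M) (by simp) (by
    intro k hk
    rcases hpos k with h | h
    · exact h.2
    · exfalso
      have := hc k
      rw [hk] at this
      rw [← this] at h
      simp at h)
  obtain ⟨W, hW, hT0, hT1, hWa, hWb⟩ := lanczos ν a hν ha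
  let b : Fin M → ℝ := fun k => t / (a k * om ν k)
  have hb0 : ∀ k, b k ≠ 0 := fun k => div_ne_zero ht (mul_ne_zero (ha k) (om_ne_zero hν k))
  have hWb' := hWb b (fun h => hb0 ⟨0, by omega⟩ (congrFun h _)) (by
    intro j hj
    have h1 := sum_om hν j hj
    have : ∑ k, b k * (a k * ν k ^ j) = t * ∑ k, ν k ^ j / om ν k := by
      rw [Finset.mul_sum]
      refine Finset.sum_congr rfl fun k _ => ?_
      have h2 := ha k
      have h3 := om_ne_zero hν k
      simp only [b]
      field_simp
    rw [this, h1, mul_zero])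
  have hcab : c = a + b := funext hca
  have hWc : ∀ k, (W *ᵥ c) k ≠ 0 ↔ k.val = 0 ∨ k.val + 1 = M := by
    intro k
    rw [hcab, mulVec_add, Pi.add_apply]
    have h1 := hWa k
    have h2 := hWb' k
    by_cases hk0 : k.val = 0
    · have : (W *ᵥ b) k = 0 := by
        by_contra h; have := h2.mp h; omega
      rw [this, add_zero, h1]; omega
    · have : (W *ᵥ a) k = 0 := by
        by_contra h; exact hk0 (h1.mp h)
      rw [this, zero_add, h2]; omega
  set T := W * diagonal ν * Wᵀ with hT
  have hTs : Tᵀ = T := by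
    rw [hT, transpose_mul, transpose_mul, transpose_transpose, diagonal_transpose,
      Matrix.mul_assoc]
  have hTs' : ∀ i j, T i j = T j i := fun i j => by
    conv_lhs => rw [← hTs]
    rfl
  let P : Matrix (Fin 1 ⊕ Fin M) (Fin 1 ⊕ Fin M) ℝ := fromBlocks 1 0 0 W
  let C0 : Matrix (Fin 1 ⊕ Fin M) (Fin 1 ⊕ Fin M) ℝ :=
    fromBlocks (of fun _ _ => d) (of fun _ k => (W *ᵥ c) k) (of fun k _ => (W *ᵥ c) k) T
  have hC0 : P * bord d c ν * Pᵀ = C0 := by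
    simp only [P, bord, C0]
    rw [block_conj]
    congr 1
    ext i k
    rw [Matrix.mul_apply]
    simp only [of_apply, transpose_apply, mulVec, dotProduct]
    exact Finset.sum_congr rfl fun _ _ => mul_comm _ _
  have hch : C0.charpoly = p := by
    rw [← hC0, charpoly_conj _ _ (block_orth W hW), hd]
  refine ⟨reindex finSumFinEquiv finSumFinEquiv C0, ?_, ?_, ?_⟩
  · rw [transpose_reindex]
    congr 1
    simp only [C0, fromBlocks_transpose, hTs]
    rfl
  · intro i j hij
    obtain ⟨x, rfl⟩ := finSumFinEquiv.surjective i
    obtain ⟨y, rfl⟩ := finSumFinEquiv.surjective j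
    rw [reindex_apply, submatrix_apply, Equiv.symm_apply_apply, Equiv.symm_apply_apply]
    rcases x with x | x <;> rcases y with y | y
    · simp [Fin.lt_def] at hij
    · simp only [C0, fromBlocks_apply₁₂, of_apply, hWc, finSumFinEquiv_apply_left,
        finSumFinEquiv_apply_right, Fin.val_castAdd, Fin.val_natAdd]
      omega
    · simp [Fin.lt_def] at hij
    · simp only [finSumFinEquiv_apply_right, Fin.lt_def, Fin.val_natAdd] at hij
      simp only [C0, fromBlocks_apply₂₂, finSumFinEquiv_apply_right, Fin.val_natAdd]
      rw [hTs']
      constructor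
      · intro h
        by_contra h'
        exact h (hT0 y x (by omega))
      · intro h
        exact hT1 y x (by omega)
  · rw [charpoly_reindex, hch]

end assemble

/-- Example 3.11: let `X` be the two endpoints of `P_n` (`n ≥ 2`), `H`
connected, and `J = (P_n, X) ∨ H`. For every `s` with `2s ≤ n + |H|`, some `A ∈ S(J)`
realises the unordered multiplicity list `{2^(s), 1^(n+|H|−2s)}`. -/
theorem statement16 (n h : ℕ) (hn : 2 ≤ n) (H : SimpleGraph (Fin h)) (hH : H.Connected)
    (s : ℕ) (hs : 2 * s ≤ n + h) :
    ∃ A : Matrix (Fin n ⊕ Fin h) (Fin n ⊕ Fin h) ℝ,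
      inS (partialJoin (SimpleGraph.pathGraph n)
        {i : Fin n | i.val = 0 ∨ i.val = n - 1} H) A ∧
      ∃ (lam : Fin s → ℝ) (mu : Fin (n + h - 2 * s) → ℝ),
        Function.Injective lam ∧ Function.Injective mu ∧
        (∀ i j, lam i ≠ mu j) ∧
        specMultiset A = 2 • (Finset.univ.val.map lam) + Finset.univ.val.map mu := by
  have hh : 0 < h := by
    obtain ⟨v⟩ := hH.nonempty
    exact v.pos
  obtain ⟨C, hCs, hC, hch⟩ := cycle_exists (n + h) s (by omega) hs
  have hCs' : ∀ i j, C i j = C j i := fun i j => by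
    conv_lhs => rw [← hCs]
    rfl
  let C' : Matrix (Fin n ⊕ Fin h) (Fin n ⊕ Fin h) ℝ := C.submatrix finSumFinEquiv finSumFinEquiv
  have hch' : C'.charpoly = polT s (n + h - 2 * s) := by
    rw [← hch]; exact charpoly_reindex finSumFinEquiv.symm C
  let B11 : Matrix (Fin n) (Fin n) ℝ := of fun i j => C (Fin.castAdd h i) (Fin.castAdd h j)
  let B12 : Matrix (Fin n) (Fin h) ℝ := of fun i j => C (Fin.castAdd h i) (Fin.natAdd n j)
  let B22 : Matrix (Fin h) (Fin h) ℝ := of fun i j => C (Fin.natAdd n i) (Fin.natAdd n j)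
  have hB11s : B11ᵀ = B11 := by ext i j; exact hCs' _ _
  have hB22s : B22ᵀ = B22 := by ext i j; exact hCs' _ _
  have hC' : C' = fromBlocks B11 B12 B12ᵀ B22 := by
    ext i j
    rcases i with i | i <;> rcases j with j | j
    · rfl
    · rfl
    · exact hCs' _ _
    · rfl
  have h11 : ∀ i j : Fin n, i < j → (B11 i j ≠ 0 ↔ i.val + 1 = j.val) := by
    intro i j hij
    have := hC (Fin.castAdd h i) (Fin.castAdd h j) hij
    simp only [Fin.val_castAdd] at this
    simp only [B11, of_apply, this]
    omega
  have h12 : ∀ (i : Fin n) (j : Fin h), (B12 i j ≠ 0 ↔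
      (i.val + 1 = n ∧ j.val = 0) ∨ (i.val = 0 ∧ j.val + 1 = h)) := by
    intro i j
    have := hC (Fin.castAdd h i) (Fin.natAdd n j) (by rw [Fin.lt_def, Fin.val_castAdd, Fin.val_natAdd]; omega)
    simp only [Fin.val_castAdd, Fin.val_natAdd] at this
    simp only [B12, of_apply, this]
    omega
  have h22 : ∀ i j : Fin h, i < j → (B22 i j ≠ 0 ↔ i.val + 1 = j.val) := by
    intro i j hij
    have := hC (Fin.natAdd n i) (Fin.natAdd n j) (by
      rw [Fin.lt_def, Fin.val_natAdd, Fin.val_natAdd]; have := Fin.lt_def.mp hij; omega)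
    simp only [Fin.val_natAdd] at this
    simp only [B22, of_apply, this]
    omega
  obtain ⟨V, β, hVV, hBV, hβ, hV0, hVl⟩ := jac_diag hh B22 hB22s
    (fun i j hij => by
      by_contra h0
      have := (h22 i j (by rw [Fin.lt_def]; omega)).mp h0
      omega)
    (fun i j hij => (h22 i j (by rw [Fin.lt_def]; omega)).mpr hij)
  obtain ⟨Q, hQQ, ⟨hQs, hQ⟩, hQf⟩ := perturb β hβ H _ _ hV0 hVl
  let R := Q * Vᵀ
  have hVV' : Vᵀ * V = 1 := mul_eq_one_comm.mp hVV
  have hRR : R * Rᵀ = 1 := by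
    simp only [R, transpose_mul, transpose_transpose]
    calc Q * Vᵀ * (V * Qᵀ) = Q * (Vᵀ * V) * Qᵀ := by simp only [Matrix.mul_assoc]
      _ = 1 := by rw [hVV', Matrix.mul_one, hQQ]
  have hRB : R * B22 * Rᵀ = Q * diagonal β * Qᵀ := by
    rw [hBV]
    simp only [R, transpose_mul, transpose_transpose]
    calc Q * Vᵀ * (V * diagonal β * Vᵀ) * (V * Qᵀ)
        = Q * (Vᵀ * V) * diagonal β * (Vᵀ * V) * Qᵀ := by simp only [Matrix.mul_assoc]
      _ = _ := by rw [hVV', Matrix.mul_one, Matrix.mul_one]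
  have hR0 : ∀ j, R j ⟨0, hh⟩ ≠ 0 := fun j => by
    have := (hQf j).1
    simp only [mulVec, dotProduct] at this
    simpa only [R, Matrix.mul_apply, transpose_apply] using this
  have hRl : ∀ j, R j ⟨h - 1, by omega⟩ ≠ 0 := fun j => by
    have := (hQf j).2
    simp only [mulVec, dotProduct] at this
    simpa only [R, Matrix.mul_apply, transpose_apply] using this
  have hBR : ∀ (i : Fin n) (j : Fin h), ((B12 * Rᵀ) i j ≠ 0 ↔ i.val = 0 ∨ i.val = n - 1) := by
    intro i j
    rw [Matrix.mul_apply]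
    simp only [transpose_apply]
    by_cases hi0 : i.val = 0
    · rw [Finset.sum_eq_single ⟨h - 1, by omega⟩]
      · have : B12 i ⟨h - 1, by omega⟩ ≠ 0 := (h12 _ _).mpr (Or.inr ⟨hi0, by simp; omega⟩)
        simp [hi0, this, hRl j]
      · intro l _ hl
        have : B12 i l = 0 := by
          by_contra h0
          rcases (h12 _ _).mp h0 with h1 | h1
          · omega
          · exact hl (Fin.ext (by simp; omega))
        rw [this, zero_mul]
      · simp
    · by_cases hin : i.val = n - 1
      · rw [Finset.sum_eq_single ⟨0, hh⟩]
        · have : B12 i ⟨0, hh⟩ ≠ 0 := (h12 _ _).mpr (Or.inl ⟨by omega, rfl⟩)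
          simp [hin, this, hR0 j]
        · intro l _ hl
          have : B12 i l = 0 := by
            by_contra h0
            rcases (h12 _ _).mp h0 with h1 | h1
            · exact hl (Fin.ext (by simp; omega))
            · omega
          rw [this, zero_mul]
        · simp
      · rw [Finset.sum_eq_zero]
        · simp [hi0, hin]
        · intro l _
          have : B12 i l = 0 := by
            by_contra h0
            rcases (h12 _ _).mp h0 with h1 | h1 <;> omega
          rw [this, zero_mul]
  let A : Matrix (Fin n ⊕ Fin h) (Fin n ⊕ Fin h) ℝ :=
    fromBlocks B11 (B12 * Rᵀ) (B12 * Rᵀ)ᵀ (Q * diagonal β * Qᵀ)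
  have hA : A.charpoly = polT s (n + h - 2 * s) := by
    have : A = fromBlocks 1 0 0 R * C' * (fromBlocks 1 0 0 R)ᵀ := by
      rw [hC', block_conj, hRB]
      simp only [A, transpose_mul, transpose_transpose]
    rw [this, charpoly_conj _ _ (block_orth R hRR), hch']
  refine ⟨A, ⟨?_, ?_⟩, lamF s, muF s _, ?_, ?_, ?_, ?_⟩
  · simp only [A, IsSymm, fromBlocks_transpose, transpose_transpose, hB11s]
    rw [hQs]
  · intro x y hxy
    rcases x with i | i <;> rcases y with j | j
    · have hij : i ≠ j := fun e => hxy (by rw [e])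
      have hl : B11 i j ≠ 0 ↔ (i.val + 1 = j.val ∨ j.val + 1 = i.val) := by
        rcases lt_or_gt_of_ne hij with hlt | hlt
        · have h1 := Fin.lt_def.mp hlt
          rw [h11 i j hlt]; omega
        · have h1 := Fin.lt_def.mp hlt
          have h2 : B11 i j = B11 j i := hCs' _ _
          rw [h2, h11 j i hlt]; omega
      change B11 i j ≠ 0 ↔ _
      rw [hl, ← SimpleGraph.pathGraph_adj]
      constructor
      · intro h1
        exact Or.inl ⟨i, j, h1, rfl, rfl⟩
      · rintro (⟨a, b, h1, h2, h3⟩ | ⟨a, b, h1, h2, h3⟩ | ⟨a, h1, b, h2, h3⟩ | ⟨a, h1, b, h2, h3⟩)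
        · cases h2; cases h3; exact h1
        · cases h2
        · cases h3
        · cases h2
    · simp only [A, fromBlocks_apply₁₂, hBR, partialJoin]
      simp
    · simp only [A, fromBlocks_apply₂₁, transpose_apply, hBR, partialJoin]
      simp
    · have hij : i ≠ j := fun e => hxy (by rw [e])
      simp only [A, fromBlocks_apply₂₂, hQ i j hij, partialJoin]
      simp
  · intro i j hij
    simp only [lamF] at hij
    have : (i.val : ℝ) = j.val := by linarith
    exact Fin.ext (by exact_mod_cast this)
  · intro i j hij
    simp only [muF] at hij
    have : (i.val : ℝ) = j.val := by linarith
    exact Fin.ext (by exact_mod_cast this)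
  · intro i j hij
    have := half_ne (2 * i.val) (2 * s + j.val)
    push_cast at this
    exact this hij
  · rw [specMultiset, hA, polT, Polynomial.roots_multiset_prod_X_sub_C]
    rfl
end

section
/- Let m ≥ 2 and let H be a connected simple graph with exactly 3m − 2 vertices. Then for any real numbers λ₁ < λ₂ < … < λ_m there exists a matrix N ∈ S(K₂ ∨ H) with spectrum {λ₁^(3), λ₂^(3), …, λ_m^(3)} (each λ_i an eigenvalue of multiplicity exactly 3). In particular, q(K₂ ∨ H) ≤ m. -/
open Matrix Filter

theorem aux_interlace (k : ℕ) (lam : Fin (k + 2) → ℝ) (mu : Fin (k + 1) → ℝ)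
    (hlam : StrictMono lam) (h1 : ∀ j, lam j.castSucc < mu j) (h2 : ∀ j, mu j < lam j.succ) :
    ∃ b : Fin (k + 1) → ℝ, (∀ j, b j ≠ 0) ∧
      ∀ x, (∀ j, x ≠ mu j) →
        (∏ j, (x - mu j)) * (x - (∑ i, lam i - ∑ j, mu j) - ∑ j, b j ^ 2 / (x - mu j))
          = ∏ i, (x - lam i) := by
  classical
  have hmu : StrictMono mu := by
    intro i j hij
    refine (h2 i).trans_le (le_trans ?_ (h1 j).le)
    apply hlam.monotone
    rw [Fin.le_def]; simpa using hij
  set a := ∑ i, lam i - ∑ j, mu j with ha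
  let p : Polynomial ℝ := ∏ i, (Polynomial.X - Polynomial.C (lam i))
  let p2 : Polynomial ℝ := ∏ i, (Polynomial.X - Polynomial.C ((Fin.cons a mu : Fin (k + 2) → ℝ) i))
  have key : ∀ f : Fin (k + 2) → ℝ,
      (∏ i, (Polynomial.X - Polynomial.C (f i)) : Polynomial ℝ).coeff (k + 1) = - ∑ i, f i := by
    intro f
    have := Polynomial.prod_X_sub_C_coeff_card_pred (Finset.univ : Finset (Fin (k + 2))) f (by simp)
    simpa using this
  have keyd : ∀ f : Fin (k + 2) → ℝ,
      (∏ i, (Polynomial.X - Polynomial.C (f i)) : Polynomial ℝ).natDegree = k + 2 := by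
    intro f
    simp
  have keym : ∀ f : Fin (k + 2) → ℝ,
      (∏ i, (Polynomial.X - Polynomial.C (f i)) : Polynomial ℝ).Monic := by
    intro f
    exact Polynomial.monic_prod_X_sub_C f _
  have hdeg : (p - p2).degree < (Finset.univ : Finset (Fin (k + 1))).card := by
    rw [Polynomial.degree_lt_iff_coeff_zero]
    intro m hm
    simp only [Finset.card_univ, Fintype.card_fin] at hm
    rw [Polynomial.coeff_sub]
    rcases hm.eq_or_lt with rfl | hm
    · rw [key, key, Fin.sum_univ_succ (Fin.cons a mu : Fin (k + 2) → ℝ)]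
      simp [ha]
    · rcases (show k + 2 ≤ m from hm).eq_or_lt with rfl | hm
      · have e1 := (keym lam).coeff_natDegree
        have e2 := (keym (Fin.cons a mu)).coeff_natDegree
        rw [keyd] at e1 e2
        rw [e1, e2, sub_self]
      · rw [Polynomial.coeff_eq_zero_of_natDegree_lt (by rw [keyd]; exact hm),
          Polynomial.coeff_eq_zero_of_natDegree_lt (by rw [keyd]; exact hm), sub_self]
  have hint := Lagrange.eq_interpolate (s := Finset.univ) (v := mu) hmu.injective.injOn hdeg
  have hp : ∀ x, p.eval x = ∏ i, (x - lam i) := by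
    intro x; simp [p, Polynomial.eval_prod]
  have hp2 : ∀ x, p2.eval x = (x - a) * ∏ j, (x - mu j) := by
    intro x; simp [p2, Polynomial.eval_prod, Fin.prod_univ_succ (n := k + 1)]
  have hp2mu : ∀ j, p2.eval (mu j) = 0 := by
    intro j; rw [hp2, Finset.prod_eq_zero (Finset.mem_univ j) (sub_self _), mul_zero]
  let c : Fin (k + 1) → ℝ := fun j => - (Lagrange.nodalWeight Finset.univ mu j * ∏ i, (mu j - lam i))
  have hc : ∀ j, 0 < c j := by
    intro j
    have e : (∏ i, (mu j - lam i)) = (mu j - lam j.castSucc) * ((mu j - lam j.succ) *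
        ∏ l ∈ Finset.univ.erase j, (mu j - lam (j.castSucc.succAbove l))) := by
      rw [Fin.prod_univ_succAbove _ j.castSucc, ← Finset.mul_prod_erase _ _ (Finset.mem_univ j)]
      simp
    have e2 : 0 < ∏ l ∈ Finset.univ.erase j,
        ((mu j - mu l)⁻¹ * (mu j - lam (j.castSucc.succAbove l))) := by
      apply Finset.prod_pos
      intro l hl
      rcases lt_or_gt_of_ne (Finset.ne_of_mem_erase hl) with h | h
      · rw [Fin.succAbove_of_castSucc_lt _ _ (by simpa using h)]
        have := hmu h
        have := h1 l
        exact mul_pos (inv_pos.2 (by linarith)) (by linarith)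
      · rw [Fin.succAbove_of_le_castSucc _ _ (by simpa using h.le)]
        have := hmu h
        have := h2 l
        exact mul_pos_of_neg_of_neg (inv_lt_zero.2 (by linarith)) (by linarith)
    rw [Finset.prod_mul_distrib] at e2
    have f1 := sub_pos.2 (h1 j)
    have f2 := sub_pos.2 (h2 j)
    simp only [c, Lagrange.nodalWeight]
    rw [e]
    have := mul_pos (mul_pos f1 f2) e2
    linarith
  refine ⟨fun j => Real.sqrt (c j), fun j => (Real.sqrt_pos.2 (hc j)).ne', ?_⟩
  intro x hx
  have h3 := congrArg (Polynomial.eval x) hint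
  rw [Lagrange.eval_interpolate_not_at_node _ (fun i _ => hx i), Polynomial.eval_sub, hp, hp2,
    Lagrange.eval_nodal] at h3
  have h4 : ∀ j, Real.sqrt (c j) ^ 2 = c j := fun j => Real.sq_sqrt (hc j).le
  simp only [h4]
  have h5 : ∑ j, c j / (x - mu j) = - ∑ i, Lagrange.nodalWeight Finset.univ mu i * (x - mu i)⁻¹ *
      Polynomial.eval (mu i) (p - p2) := by
    rw [← Finset.sum_neg_distrib]
    refine Finset.sum_congr rfl fun j _ => ?_
    rw [Polynomial.eval_sub, hp2mu, hp]
    simp only [c]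
    ring
  rw [h5]
  linear_combination -h3

theorem aux_open (n : ℕ) (d : Fin n → ℝ) (hd : Function.Injective d)
    (W : Matrix (Fin n) (Fin n) ℝ) (hW : W.IsSymm)
    (s : Set (Fin n → Fin n → ℝ)) (hs : s ∈ nhds (fun i j => (1 : Matrix (Fin n) (Fin n) ℝ) i j)) :
    ∃ ε : ℝ, ε ≠ 0 ∧ ∃ U ∈ s, (Matrix.of U)ᵀ * Matrix.of U = 1 ∧
      ∀ i j, i ≠ j → (Matrix.of U * Matrix.diagonal d * (Matrix.of U)ᵀ) i j = ε * W i j := by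
  let one : Fin n → Fin n → ℝ := fun i j => (1 : Matrix (Fin n) (Fin n) ℝ) i j
  let P : Fin n → Fin n → ((Fin n → Fin n → ℝ) →L[ℝ] ℝ) := fun i j =>
    (ContinuousLinearMap.proj (R := ℝ) (φ := fun _ : Fin n => ℝ) j).comp
      (ContinuousLinearMap.proj (R := ℝ) (φ := fun _ : Fin n => Fin n → ℝ) i)
  have hPa : ∀ a b K, P a b K = K a b := fun _ _ _ => rfl
  let Φ : (Fin n → Fin n → ℝ) → (Fin n → Fin n → ℝ) := fun U i j =>
    if i ≤ j then ∑ k, U k i * U k j else ∑ k, d k * (U i k * U j k)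
  let Lc : Fin n → Fin n → ((Fin n → Fin n → ℝ) →L[ℝ] ℝ) := fun i j =>
    if i ≤ j then ∑ k, (one k i • P k j + one k j • P k i)
    else ∑ k, d k • (one i k • P j k + one j k • P i k)
  let L : (Fin n → Fin n → ℝ) →L[ℝ] (Fin n → Fin n → ℝ) :=
    ContinuousLinearMap.pi fun i => ContinuousLinearMap.pi fun j => Lc i j
  have hc : ∀ i j, HasStrictFDerivAt (fun U => Φ U i j) (Lc i j) one := by
    intro i j
    have hP : ∀ a b, HasStrictFDerivAt (fun U : Fin n → Fin n → ℝ => U a b) (P a b) one :=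
      fun a b => (P a b).hasStrictFDerivAt
    by_cases hij : i ≤ j
    · have : HasStrictFDerivAt (fun U : Fin n → Fin n → ℝ => ∑ k, U k i * U k j)
          (∑ k, (one k i • P k j + one k j • P k i)) one :=
        HasStrictFDerivAt.fun_sum fun k _ => (hP k i).mul (hP k j)
      simp only [Φ, Lc, hij, if_true]
      exact this
    · have : HasStrictFDerivAt (fun U : Fin n → Fin n → ℝ => ∑ k, d k * (U i k * U j k))
          (∑ k, d k • (one i k • P j k + one j k • P i k)) one :=
        HasStrictFDerivAt.fun_sum fun k _ => ((hP i k).mul (hP j k)).const_mul (d k)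
      simp only [Φ, Lc, hij, if_false]
      exact this
  have hΦ : HasStrictFDerivAt Φ L one :=
    hasStrictFDerivAt_pi.2 fun i => hasStrictFDerivAt_pi.2 fun j => hc i j
  have hL : ∀ K i j, L K i j = if i ≤ j then K i j + K j i else d i * K j i + d j * K i j := by
    intro K i j
    show Lc i j K = _
    by_cases hij : i ≤ j
    · simp only [Lc, hij, if_true, ContinuousLinearMap.sum_apply, ContinuousLinearMap.add_apply,
        ContinuousLinearMap.smul_apply, hPa]
      simp [one, Matrix.one_apply, Finset.sum_add_distrib]
    · simp only [Lc, hij, if_false, ContinuousLinearMap.sum_apply, ContinuousLinearMap.add_apply,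
        ContinuousLinearMap.smul_apply, hPa]
      simp [one, Matrix.one_apply, Finset.sum_add_distrib, mul_add]
  have hinj : Function.Injective (L : (Fin n → Fin n → ℝ) →ₗ[ℝ] (Fin n → Fin n → ℝ)) := by
    rw [← LinearMap.ker_eq_bot, LinearMap.ker_eq_bot']
    intro K hK
    have h : ∀ i j, L K i j = 0 := fun i j => congrFun (congrFun hK i) j
    have hlt : ∀ i j, i < j → K i j = 0 ∧ K j i = 0 := by
      intro i j hij
      have e1 := h i j
      have e2 := h j i
      rw [hL, if_pos hij.le] at e1
      rw [hL, if_neg (not_le.2 hij)] at e2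
      have hne : d i - d j ≠ 0 := sub_ne_zero.2 fun e => hij.ne (hd e)
      have : K j i = 0 := by
        have : (d i - d j) * K j i = 0 := by
          have : K i j = - K j i := by linarith
          rw [this] at e2; linarith
        exact (mul_eq_zero.1 this).resolve_left hne
      exact ⟨by linarith, this⟩
    funext i j
    rcases lt_trichotomy i j with hij | rfl | hij
    · exact (hlt i j hij).1
    · have e1 := h i i
      rw [hL, if_pos le_rfl] at e1
      show K i i = 0
      linarith
    · exact (hlt j i hij).2
  have hsurj : (L : (Fin n → Fin n → ℝ) →ₗ[ℝ] (Fin n → Fin n → ℝ)).range = ⊤ :=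
    LinearMap.range_eq_top.2 (LinearMap.injective_iff_surjective.1 hinj)
  have hmap := hΦ.map_nhds_eq_of_surj hsurj
  let T : ℝ → Fin n → Fin n → ℝ := fun ε i j => if i ≤ j then (1 : Matrix (Fin n) (Fin n) ℝ) i j else ε * W i j
  have hT0 : T 0 = Φ one := by
    funext i j
    by_cases hij : i ≤ j
    · simp [T, Φ, hij, one, Matrix.one_apply, eq_comm]
    · have : j ≠ i := fun e => hij e.ge
      simp [T, Φ, hij, one, Matrix.one_apply, this.symm]
  have hTc : Continuous T := by
    refine continuous_pi fun i => continuous_pi fun j => ?_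
    by_cases hij : i ≤ j
    · simp only [T, hij, if_true]; fun_prop
    · simp only [T, hij, if_false]; fun_prop
  have hmem : Φ '' s ∈ nhds (T 0) := by
    rw [hT0, ← hmap]; exact Filter.image_mem_map hs
  have hev : ∀ᶠ ε in nhds (0 : ℝ), T ε ∈ Φ '' s := hTc.continuousAt.eventually hmem
  have hev2 : ∀ᶠ ε in nhdsWithin (0 : ℝ) {0}ᶜ, T ε ∈ Φ '' s ∧ ε ≠ 0 :=
    (hev.filter_mono nhdsWithin_le_nhds).and self_mem_nhdsWithin
  obtain ⟨ε, ⟨U, hU, hUT⟩, hε⟩ := hev2.exists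
  have hU' : ∀ i j, Φ U i j = T ε i j := fun i j => congrFun (congrFun hUT i) j
  have s1 : ∀ i j, ((Matrix.of U)ᵀ * Matrix.of U) i j = ∑ k, U k i * U k j := by
    intro i j; simp [Matrix.mul_apply]
  have s2 : ∀ i j, (Matrix.of U * Matrix.diagonal d * (Matrix.of U)ᵀ) i j
      = ∑ k, d k * (U i k * U j k) := by
    intro i j
    rw [Matrix.mul_apply]
    refine Finset.sum_congr rfl fun k _ => ?_
    rw [Matrix.mul_diagonal]; simp; ring
  refine ⟨ε, hε, U, hU, ?_, ?_⟩
  · have aux : ∀ i j, i ≤ j → ∑ k, U k i * U k j = (1 : Matrix (Fin n) (Fin n) ℝ) i j := by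
      intro i j hij
      have := hU' i j
      simpa only [Φ, T, hij, if_true] using this
    ext i j
    rw [s1]
    rcases le_total i j with hij | hij
    · exact aux i j hij
    · rw [← Matrix.transpose_apply (1 : Matrix (Fin n) (Fin n) ℝ), Matrix.transpose_one, ← aux j i hij]
      exact Finset.sum_congr rfl fun k _ => mul_comm _ _
  · have aux : ∀ i j, j < i → ∑ k, d k * (U i k * U j k) = ε * W i j := by
      intro i j hij
      have := hU' i j
      simpa only [Φ, T, not_le.2 hij, if_false] using this
    intro i j hij
    rw [s2]
    rcases lt_or_gt_of_ne hij with h | h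
    · rw [← hW.apply, ← aux j i h]
      exact Finset.sum_congr rfl fun k _ => by ring
    · exact aux i j h

theorem aux_U (n : ℕ) (H : SimpleGraph (Fin n)) (d : Fin n → ℝ) (hd : Function.Injective d)
    (y : Fin n → ℝ) (hy : ∀ v, y v = 0 → ∃ w, H.Adj v w ∧ y w ≠ 0) :
    ∃ U : Matrix (Fin n) (Fin n) ℝ, Uᵀ * U = 1 ∧ inS H (U * Matrix.diagonal d * Uᵀ) ∧
      ∀ v, (U *ᵥ y) v ≠ 0 := by
  classical
  let W : Matrix (Fin n) (Fin n) ℝ := Matrix.of fun i j =>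
    if H.Adj i j then (if y i = y j then 1 else (d j - d i) * (y j - y i)) else 0
  have hWs : W.IsSymm := by
    ext i j
    simp only [W, Matrix.transpose_apply, Matrix.of_apply, H.adj_comm j i, eq_comm (a := y j)]
    split_ifs <;> ring
  have hW0 : ∀ i j, W i j ≠ 0 ↔ H.Adj i j := by
    intro i j
    by_cases hij : H.Adj i j
    · by_cases hyy : y i = y j
      · simp [W, hij, hyy]
      · have h1 : d j - d i ≠ 0 := sub_ne_zero.2 fun e => hij.ne (hd e).symm
        have h2 : y j - y i ≠ 0 := sub_ne_zero.2 fun e => hyy e.symm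
        simp [W, hij, hyy, h1, h2]
    · simp [W, hij]
  let A : Fin n → (Fin n → Fin n → ℝ) → ℝ := fun i U => ∑ k, d k * (U i k * U i k)
  let G : Fin n → (Fin n → Fin n → ℝ) → ℝ := fun i U => ∑ j ∈ Finset.univ.erase i,
    y j * (∑ l ∈ Finset.univ.erase i, W i l * U l j) / (d j - A i U)
  let one : Fin n → Fin n → ℝ := fun i j => (1 : Matrix (Fin n) (Fin n) ℝ) i j
  have hA1 : ∀ i, A i one = d i := by
    intro i; simp [A, one, Matrix.one_apply]
  have hAc : ∀ i, Continuous (A i) := by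
    intro i; simp only [A]; fun_prop
  have hGc : ∀ i, ContinuousAt (G i) one := by
    intro i
    refine tendsto_finsetSum _ fun j hj => ?_
    have hne : d j - A i one ≠ 0 := by
      rw [hA1]; exact sub_ne_zero.2 fun e => (Finset.ne_of_mem_erase hj) (hd e)
    refine ContinuousAt.div ?_ ?_ hne
    · refine Continuous.continuousAt (continuous_const.mul (continuous_finsetSum _ fun l _ => ?_))
      fun_prop
    · exact (continuous_const.sub (hAc i)).continuousAt
  have hG1 : ∀ i, y i = 0 → 0 < G i one := by
    intro i hi
    have : G i one = ∑ j ∈ Finset.univ.erase i, if H.Adj i j then y j ^ 2 else 0 := by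
      refine Finset.sum_congr rfl fun j hj => ?_
      have hji := Finset.ne_of_mem_erase hj
      have hne : d j - d i ≠ 0 := sub_ne_zero.2 fun e => hji (hd e)
      have : ∑ l ∈ Finset.univ.erase i, W i l * one l j = W i j := by
        simp [one, Matrix.one_apply, hji]
      rw [this, hA1]
      by_cases hij : H.Adj i j
      · by_cases hyy : y j = 0
        · simp [hyy]
        · have : ¬ (0 = y j) := fun e => hyy e.symm
          simp only [W, Matrix.of_apply, hij, hi, this, if_true, if_false]
          field_simp
          ring
      · simp [W, hij]
    rw [this]
    obtain ⟨w, hw, hyw⟩ := hy i hi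
    refine Finset.sum_pos' (fun j _ => by split_ifs <;> positivity)
      ⟨w, Finset.mem_erase.2 ⟨hw.ne', Finset.mem_univ _⟩, ?_⟩
    rw [if_pos hw]; positivity
  have hev : ∀ᶠ U in nhds one, (∀ i, y i ≠ 0 → ∑ j, U i j * y j ≠ 0) ∧
      (∀ i, y i = 0 → G i U ≠ 0) ∧ ∀ i j, j ≠ i → d j - A i U ≠ 0 := by
    refine Filter.Eventually.and ?_ (Filter.Eventually.and ?_ ?_)
    · refine Filter.eventually_all.2 fun i => ?_
      by_cases hi : y i = 0
      · exact Filter.Eventually.of_forall fun U h => absurd hi h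
      · have hc : Continuous fun U : Fin n → Fin n → ℝ => ∑ j, U i j * y j := by fun_prop
        have h1 : ∑ j, one i j * y j ≠ 0 := by simpa [one, Matrix.one_apply] using hi
        exact (hc.continuousAt.eventually_ne h1).mono fun U h _ => h
    · refine Filter.eventually_all.2 fun i => ?_
      by_cases hi : y i = 0
      · exact ((hGc i).eventually_ne (hG1 i hi).ne').mono fun U h _ => h
      · exact Filter.Eventually.of_forall fun U h => absurd h hi
    · refine Filter.eventually_all.2 fun i => Filter.eventually_all.2 fun j => ?_
      by_cases hji : j = i
      · exact Filter.Eventually.of_forall fun U h => absurd hji h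
      · have hc : Continuous fun U : Fin n → Fin n → ℝ => d j - A i U :=
          continuous_const.sub (hAc i)
        have h1 : d j - A i one ≠ 0 := by
          rw [hA1]; exact sub_ne_zero.2 fun e => hji (hd e)
        exact (hc.continuousAt.eventually_ne h1).mono fun U h _ => h
  obtain ⟨ε, hε, U, ⟨hU1, hU2, hU3⟩, hUU, hUD⟩ := aux_open n d hd W hWs _ hev
  refine ⟨Matrix.of U, hUU, ⟨?_, ?_⟩, ?_⟩
  · rw [Matrix.IsSymm]
    simp [Matrix.transpose_mul, Matrix.mul_assoc]
  · intro i j hij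
    rw [hUD i j hij, ← hW0]
    simp [hε]
  · intro i
    have hmv : (Matrix.of U *ᵥ y) i = ∑ j, U i j * y j := by
      simp [Matrix.mulVec, dotProduct]
    rw [hmv]
    by_cases hi : y i = 0
    · have hmain : ∑ j, U i j * y j = ε * G i U := by
        rw [← Finset.add_sum_erase _ _ (Finset.mem_univ i), hi, mul_zero, zero_add,
          Finset.mul_sum]
        refine Finset.sum_congr rfl fun j hj => ?_
        have hji := Finset.ne_of_mem_erase hj
        have h3 := hU3 i j hji
        have heq : (Matrix.of U * Matrix.diagonal d * (Matrix.of U)ᵀ) * Matrix.of U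
            = Matrix.of U * Matrix.diagonal d := by
          rw [Matrix.mul_assoc, hUU, Matrix.mul_one]
        have heq' := congrFun (congrFun heq i) j
        have hdiag : (Matrix.of U * Matrix.diagonal d * (Matrix.of U)ᵀ) i i = A i U := by
          rw [Matrix.mul_apply]
          refine Finset.sum_congr rfl fun k _ => ?_
          rw [Matrix.mul_diagonal]; simp; ring
        rw [Matrix.mul_apply, ← Finset.add_sum_erase _ _ (Finset.mem_univ i), hdiag,
          Matrix.mul_diagonal] at heq'
        have hs : ∑ x ∈ Finset.univ.erase i,
            (Matrix.of U * Matrix.diagonal d * (Matrix.of U)ᵀ) i x * Matrix.of U x j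
            = ε * ∑ l ∈ Finset.univ.erase i, W i l * U l j := by
          rw [Finset.mul_sum]
          refine Finset.sum_congr rfl fun l hl => ?_
          rw [hUD i l (Finset.ne_of_mem_erase hl).symm]; simp; ring
        rw [hs] at heq'
        simp only [Matrix.of_apply] at heq'
        have e2 : U i j * (d j - A i U) = ε * ∑ l ∈ Finset.univ.erase i, W i l * U l j := by
          linarith
        rw [eq_comm, mul_div_assoc', div_eq_iff h3]
        linear_combination (- y j) * e2
      rw [hmain]
      exact mul_ne_zero hε (hU2 i hi)
    · exact hU1 i hi

theorem aux_dom (n : ℕ) (hn : 2 ≤ n) (H : SimpleGraph (Fin n)) (hH : H.Connected) :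
    ∃ S : Finset (Fin n), 2 * S.card ≤ n ∧ ∀ v, v ∉ S → ∃ w ∈ S, H.Adj v w := by
  classical
  let r : Fin n := ⟨0, by omega⟩
  let S : Finset (Fin n) := Finset.univ.filter fun v => Even (H.dist r v)
  have key : ∀ v, ∃ w, H.Adj v w ∧ (Even (H.dist r w) ↔ ¬ Even (H.dist r v)) := by
    intro v
    by_cases hv : v = r
    · rw [hv]
      obtain ⟨w, hw⟩ : ∃ w, H.Adj r w := by
        have : Nontrivial (Fin n) := Fin.nontrivial_iff_two_le.2 hn
        exact hH.preconnected.exists_adj_of_nontrivial r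
      refine ⟨w, hw, ?_⟩
      rw [SimpleGraph.dist_eq_one_iff_adj.2 hw]
      simp
    · obtain ⟨p, hp⟩ := hH.exists_walk_length_eq_dist v r
      cases p with
      | nil => exact absurd rfl hv
      | @cons _ w _ h q =>
        refine ⟨w, h, ?_⟩
        rw [SimpleGraph.dist_comm (u := r) (v := w), SimpleGraph.dist_comm (u := r) (v := v)]
        have h1 := SimpleGraph.dist_le q
        have h2 := hH.dist_triangle (u := v) (v := w) (w := r)
        rw [SimpleGraph.dist_eq_one_iff_adj.2 h] at h2
        rw [SimpleGraph.Walk.length_cons] at hp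
        have h3 : H.dist v r = H.dist w r + 1 := by omega
        rw [h3, Nat.even_add_one, not_not]
  have hc : S.card + Sᶜ.card = n := by simp [Finset.card_add_card_compl]
  by_cases h : 2 * S.card ≤ n
  · refine ⟨S, h, fun v hv => ?_⟩
    obtain ⟨w, hw, he⟩ := key v
    refine ⟨w, ?_, hw⟩
    simp only [S, Finset.mem_filter, Finset.mem_univ, true_and] at hv ⊢
    exact he.2 hv
  · refine ⟨Sᶜ, by omega, fun v hv => ?_⟩
    obtain ⟨w, hw, he⟩ := key v
    refine ⟨w, ?_, hw⟩
    simp only [S, Finset.mem_compl, Finset.mem_filter, Finset.mem_univ, true_and, not_not] at hv ⊢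
    exact fun hh => he.1 hh hv

theorem aux_equiv (k : ℕ) (H : SimpleGraph (Fin (3 * (k + 2) - 2))) (hH : H.Connected) :
    ∃ e : Fin (3 * (k + 2) - 2) ≃ (Fin (k + 2) ⊕ (Fin (k + 1) ⊕ Fin (k + 1))),
      ∀ v i, e v = Sum.inl i → ∃ w j, H.Adj v w ∧ e w = Sum.inr j := by
  classical
  obtain ⟨S, hS, hdom⟩ := aux_dom _ (by omega) H hH
  obtain ⟨T, hST, -, hT⟩ := Finset.exists_subsuperset_card_eq (Finset.subset_univ S)
    (n := 2 * k + 2) (by omega) (by simp; omega)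
  have c1 : Fintype.card {v // v ∈ T} = Fintype.card (Fin (k + 1) ⊕ Fin (k + 1)) := by
    simp [hT]; omega
  have c2 : Fintype.card {v // ¬ v ∈ T} = Fintype.card (Fin (k + 2)) := by
    rw [Fintype.card_subtype_compl]; simp [hT]; omega
  let e1 := Fintype.equivOfCardEq c1
  let e2 := Fintype.equivOfCardEq c2
  let e : Fin (3 * (k + 2) - 2) ≃ (Fin (k + 2) ⊕ (Fin (k + 1) ⊕ Fin (k + 1))) :=
    (Equiv.sumCompl (fun v => v ∈ T)).symm.trans ((Equiv.sumCongr e1 e2).trans (Equiv.sumComm _ _))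
  have hin : ∀ v (h : v ∈ T), e v = Sum.inr (e1 ⟨v, h⟩) := by
    intro v h
    simp [e, Equiv.sumCompl_symm_apply_of_pos h]
  refine ⟨e, fun v i hv => ?_⟩
  have hvT : v ∉ T := by
    intro h
    rw [hin v h] at hv
    exact Sum.inr_ne_inl hv
  obtain ⟨w, hw, hadj⟩ := hdom v fun h => hvT (hST h)
  exact ⟨w, _, hadj, hin w (hST hw)⟩

theorem aux_det (n : ℕ) (d b c : Fin n → ℝ) (hbc : ∀ v, b v * c v = 0) (a a' x : ℝ)
    (hx : ∀ v, x ≠ d v) (B : Matrix (Fin n) (Fin 2) ℝ) (hB : B = Matrix.of fun v => ![b v, c v]) :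
    (Matrix.fromBlocks (Matrix.diagonal ![a, a']) Bᵀ B (Matrix.diagonal d)).charpoly.eval x
      = (∏ v, (x - d v)) * ((x - a - ∑ v, b v ^ 2 / (x - d v)) *
          (x - a' - ∑ v, c v ^ 2 / (x - d v))) := by
  have hx' : ∀ v, x - d v ≠ 0 := fun v => sub_ne_zero.2 (hx v)
  rw [Matrix.eval_charpoly]
  have h1 : Matrix.scalar (Fin 2 ⊕ Fin n) x
      - Matrix.fromBlocks (Matrix.diagonal ![a, a']) Bᵀ B (Matrix.diagonal d)
      = Matrix.fromBlocks (Matrix.diagonal ![x - a, x - a']) (-Bᵀ) (-B)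
        (Matrix.diagonal fun v => x - d v) := by
    ext i j
    rcases i with i | i <;> rcases j with j | j
    · fin_cases i <;> fin_cases j <;> simp [Matrix.scalar_apply, Matrix.diagonal_apply]
    · simp [Matrix.scalar_apply, Matrix.diagonal_apply]
    · simp [Matrix.scalar_apply, Matrix.diagonal_apply]
    · by_cases hij : i = j <;> simp [Matrix.scalar_apply, Matrix.diagonal_apply, hij]
  rw [h1]
  let hI : Invertible (Matrix.diagonal fun v => x - d v) :=
    ⟨Matrix.diagonal fun v => (x - d v)⁻¹, by simp [Matrix.diagonal_mul_diagonal, hx'],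
      by simp [Matrix.diagonal_mul_diagonal, hx']⟩
  have hinv : ⅟(Matrix.diagonal fun v => x - d v) = Matrix.diagonal fun v => (x - d v)⁻¹ := rfl
  rw [Matrix.det_fromBlocks₂₂, hinv, Matrix.det_diagonal]
  congr 1
  have h2 : ∀ i j, (-Bᵀ * (Matrix.diagonal fun v => (x - d v)⁻¹) * -B) i j
      = ∑ v, B v i * B v j / (x - d v) := by
    intro i j
    rw [Matrix.mul_apply]
    refine Finset.sum_congr rfl fun v _ => ?_
    rw [Matrix.mul_diagonal]
    simp; ring
  have h3 : ∀ v, c v * b v = 0 := fun v => by rw [mul_comm]; exact hbc v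
  generalize hM : (-Bᵀ * (Matrix.diagonal fun v => (x - d v)⁻¹) * -B) = M at h2
  rw [Matrix.det_fin_two]
  simp only [Matrix.sub_apply, h2]
  simp [hB, hbc, h3, pow_two]

theorem aux_t (n : ℕ) (p q : Fin n → ℝ) (h : ∀ v, p v + q v ≠ 0) :
    ∃ t : ℝ, t ≠ 0 ∧ ∀ v, p v + t * q v ≠ 0 ∧ - t * p v + q v ≠ 0 := by
  have hfin : (({0} : Set ℝ) ∪ Set.range (fun v => - p v / q v) ∪
      Set.range (fun v => q v / p v)).Finite :=
    ((Set.finite_singleton _).union (Set.finite_range _)).union (Set.finite_range _)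
  obtain ⟨t, ht⟩ := hfin.infinite_compl.nonempty
  simp only [Set.mem_compl_iff, Set.mem_union, Set.mem_singleton_iff, Set.mem_range, not_or,
    not_exists] at ht
  obtain ⟨⟨h0, h1⟩, h2⟩ := ht
  refine ⟨t, h0, fun v => ⟨fun e => ?_, fun e => ?_⟩⟩
  · by_cases hq : q v = 0
    · apply h v; rw [hq] at e ⊢; linarith
    · apply h1 v; rw [div_eq_iff hq]; linarith
  · by_cases hp : p v = 0
    · apply h v; rw [hp] at e ⊢; linarith
    · apply h2 v; rw [div_eq_iff hp]; linarith

theorem aux_asm (n : ℕ) (H : SimpleGraph (Fin n)) (d b c : Fin n → ℝ) (a a' : ℝ) (haa : a ≠ a')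
    (U : Matrix (Fin n) (Fin n) ℝ) (hU : Uᵀ * U = 1) (hS : inS H (U * Matrix.diagonal d * Uᵀ))
    (hne : ∀ v, (U *ᵥ b) v + (U *ᵥ c) v ≠ 0)
    (B : Matrix (Fin n) (Fin 2) ℝ) (hB : B = Matrix.of fun v => ![b v, c v]) :
    ∃ N : Matrix (Fin 2 ⊕ Fin n) (Fin 2 ⊕ Fin n) ℝ,
      inS (graphJoin (⊤ : SimpleGraph (Fin 2)) H) N ∧ N.charpoly =
      (Matrix.fromBlocks (Matrix.diagonal ![a, a']) Bᵀ B (Matrix.diagonal d)).charpoly := by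
  obtain ⟨t, ht, htv⟩ := aux_t n (U *ᵥ b) (U *ᵥ c) hne
  obtain ⟨r, hr⟩ : ∃ r : ℝ, r ^ 2 * (1 + t ^ 2) = 1 :=
    ⟨(Real.sqrt (1 + t ^ 2))⁻¹, by
      rw [inv_pow, Real.sq_sqrt (by positivity)]; exact inv_mul_cancel₀ (by positivity)⟩
  have hr0 : r ≠ 0 := by rintro rfl; simp at hr
  let R : Matrix (Fin 2) (Fin 2) ℝ := !![r, r * t; - (r * t), r]
  have hR : Rᵀ * R = 1 := by
    ext i j
    fin_cases i <;> fin_cases j <;> simp [R, Matrix.mul_apply, Fin.sum_univ_two] <;> linarith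
  let N1 := Matrix.fromBlocks (Matrix.diagonal ![a, a']) Bᵀ B (Matrix.diagonal d)
  let P : Matrix (Fin 2 ⊕ Fin n) (Fin 2 ⊕ Fin n) ℝ := Matrix.fromBlocks R 0 0 U
  have hP : Pᵀ * P = 1 := by
    simp [P, Matrix.fromBlocks_transpose, Matrix.fromBlocks_multiply, hR, hU]
  have hN1 : N1ᵀ = N1 := by
    simp [N1, Matrix.fromBlocks_transpose]
  have hN : P * N1 * Pᵀ = Matrix.fromBlocks (R * Matrix.diagonal ![a, a'] * Rᵀ) (R * Bᵀ * Uᵀ)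
      (U * B * Rᵀ) (U * Matrix.diagonal d * Uᵀ) := by
    simp [P, N1, Matrix.fromBlocks_transpose, Matrix.fromBlocks_multiply]
  have hUB : ∀ v i, (U * B * Rᵀ) v i ≠ 0 := by
    intro v i
    have e0 : (U * B) v 0 = (U *ᵥ b) v := by simp [Matrix.mul_apply, Matrix.mulVec, dotProduct, hB]
    have e1 : (U * B) v 1 = (U *ᵥ c) v := by simp [Matrix.mul_apply, Matrix.mulVec, dotProduct, hB]
    rw [Matrix.mul_apply, Fin.sum_univ_two, e0, e1]
    obtain ⟨f1, f2⟩ := htv v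
    fin_cases i
    · have := mul_ne_zero hr0 f1
      simp only [R, Matrix.transpose_apply]
      simp
      intro h; apply this; linarith
    · have := mul_ne_zero hr0 f2
      simp only [R, Matrix.transpose_apply]
      simp
      intro h; apply this; linarith
  have hsym : (P * N1 * Pᵀ).IsSymm := by
    rw [Matrix.IsSymm, Matrix.transpose_mul, Matrix.transpose_mul, hN1, Matrix.transpose_transpose,
      Matrix.mul_assoc]
  refine ⟨P * N1 * Pᵀ, ⟨hsym, ?_⟩, ?_⟩
  · have hright : ∀ v i, (P * N1 * Pᵀ) (Sum.inr v) (Sum.inl i) ≠ 0 := by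
      intro v i; rw [hN]; exact hUB v i
    intro x z hxz
    rcases x with i | v <;> rcases z with j | w
    · have h1 : (graphJoin (⊤ : SimpleGraph (Fin 2)) H).Adj (Sum.inl i) (Sum.inl j) :=
        Or.inl ⟨i, j, by simpa using hxz, rfl, rfl⟩
      refine iff_of_true ?_ h1
      have hij : i ≠ j := fun e => hxz (by rw [e])
      have hdiff : r * (r * (t * (a' - a))) ≠ 0 :=
        mul_ne_zero hr0 (mul_ne_zero hr0 (mul_ne_zero ht (sub_ne_zero.2 haa.symm)))
      rw [hN, Matrix.fromBlocks_apply₁₁]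
      fin_cases i <;> fin_cases j <;>
        simp [R, Matrix.mul_apply, Fin.sum_univ_two, Matrix.vecMul_diagonal] at hij ⊢ <;>
        (intro h; apply hdiff; linarith)
    · have h1 : (graphJoin (⊤ : SimpleGraph (Fin 2)) H).Adj (Sum.inl i) (Sum.inr w) :=
        Or.inr (Or.inr (Or.inl ⟨i, Set.mem_univ _, w, rfl, rfl⟩))
      refine iff_of_true ?_ h1
      rw [← hsym.apply]
      exact hright w i
    · have h1 : (graphJoin (⊤ : SimpleGraph (Fin 2)) H).Adj (Sum.inr v) (Sum.inl j) :=
        Or.inr (Or.inr (Or.inr ⟨j, Set.mem_univ _, v, rfl, rfl⟩))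
      exact iff_of_true (hright v j) h1
    · have h1 : (graphJoin (⊤ : SimpleGraph (Fin 2)) H).Adj (Sum.inr v) (Sum.inr w) ↔ H.Adj v w := by
        constructor
        · rintro (⟨_, _, _, h, _⟩ | ⟨_, _, hab, h, h'⟩ | ⟨_, _, _, h, _⟩ | ⟨_, _, _, _, h⟩)
          · exact absurd h Sum.inr_ne_inl
          · cases h; cases h'; exact hab
          · exact absurd h Sum.inr_ne_inl
          · exact absurd h Sum.inr_ne_inl
        · intro h; exact Or.inr (Or.inl ⟨v, w, h, rfl, rfl⟩)
      rw [h1, hN, Matrix.fromBlocks_apply₂₂]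
      exact hS.2 v w fun e => hxz (by rw [e])
  · rw [Matrix.mul_assoc, Matrix.charpoly_mul_comm, Matrix.mul_assoc, hP, Matrix.mul_one]

theorem aux_main (k : ℕ) (H : SimpleGraph (Fin (3 * (k + 2) - 2))) (hH : H.Connected)
    (lam : Fin (k + 2) → ℝ) (hlam : StrictMono lam) :
    ∃ N : Matrix (Fin 2 ⊕ Fin (3 * (k + 2) - 2)) (Fin 2 ⊕ Fin (3 * (k + 2) - 2)) ℝ,
      inS (graphJoin (⊤ : SimpleGraph (Fin 2)) H) N ∧
      specMultiset N = 3 • (Finset.univ.val.map lam) := by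
  have hstep : ∀ j : Fin (k + 1), lam j.castSucc < lam j.succ := fun j => hlam (by simp)
  let mu1 : Fin (k + 1) → ℝ := fun j => lam j.castSucc + (lam j.succ - lam j.castSucc) / 3
  let mu2 : Fin (k + 1) → ℝ := fun j => lam j.castSucc + 2 * (lam j.succ - lam j.castSucc) / 3
  have h11 : ∀ j, lam j.castSucc < mu1 j := fun j => by have := hstep j; simp only [mu1]; linarith
  have h12 : ∀ j, mu1 j < mu2 j := fun j => by have := hstep j; simp only [mu1, mu2]; linarith
  have h22 : ∀ j, mu2 j < lam j.succ := fun j => by have := hstep j; simp only [mu2]; linarith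
  have h21 : ∀ j, lam j.castSucc < mu2 j := fun j => (h11 j).trans (h12 j)
  have h13 : ∀ j, mu1 j < lam j.succ := fun j => (h12 j).trans (h22 j)
  have hsep : ∀ (i j : Fin (k + 1)), i < j → lam i.succ ≤ lam j.castSucc := by
    intro i j hij
    apply hlam.monotone
    rw [Fin.le_def]; simpa using hij
  -- a value strictly inside a gap is not one of the `lam i`
  have hgap : ∀ (i : Fin (k + 2)) (j : Fin (k + 1)) (x : ℝ), lam j.castSucc < x →
      x < lam j.succ → lam i ≠ x := by
    intro i j x hx1 hx2 h
    rw [← h, hlam.lt_iff_lt, Fin.lt_def] at hx1 hx2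
    simp at hx1 hx2
    omega
  have hinj : ∀ (f g : Fin (k + 1) → ℝ), (∀ j, lam j.castSucc < f j) → (∀ j, f j < lam j.succ) →
      (∀ j, lam j.castSucc < g j) → (∀ j, g j < lam j.succ) → ∀ i j, i ≠ j → f i ≠ g j := by
    intro f g hf1 hf2 hg1 hg2 i j hij
    rcases lt_or_gt_of_ne hij with h | h
    · exact ((hf2 i).trans_le ((hsep i j h).trans (hg1 j).le)).ne
    · exact ((hg2 j).trans_le ((hsep j i h).trans (hf1 i).le)).ne'
  obtain ⟨b1, hb1, hid1⟩ := aux_interlace k lam mu1 hlam h11 h13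
  obtain ⟨b2, hb2, hid2⟩ := aux_interlace k lam mu2 hlam h21 h22
  obtain ⟨e, he⟩ := aux_equiv k H hH
  let dI : (Fin (k + 2) ⊕ (Fin (k + 1) ⊕ Fin (k + 1))) → ℝ := Sum.elim lam (Sum.elim mu1 mu2)
  let bI : (Fin (k + 2) ⊕ (Fin (k + 1) ⊕ Fin (k + 1))) → ℝ :=
    Sum.elim (fun _ => 0) (Sum.elim b1 (fun _ => 0))
  let cI : (Fin (k + 2) ⊕ (Fin (k + 1) ⊕ Fin (k + 1))) → ℝ :=
    Sum.elim (fun _ => 0) (Sum.elim (fun _ => 0) b2)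
  have hdI : Function.Injective dI := by
    refine Function.Injective.sumElim hlam.injective (Function.Injective.sumElim ?_ ?_ ?_) ?_
    · intro i j hij
      by_contra h
      exact hinj mu1 mu1 h11 h13 h11 h13 i j h hij
    · intro i j hij
      by_contra h
      exact hinj mu2 mu2 h21 h22 h21 h22 i j h hij
    · intro i j
      by_cases h : i = j
      · rw [h]; exact (h12 j).ne
      · exact hinj mu1 mu2 h11 h13 h21 h22 i j h
    · rintro i (j | j)
      · exact hgap i j _ (h11 j) (h13 j)
      · exact hgap i j _ (h21 j) (h22 j)
  let d : Fin (3 * (k + 2) - 2) → ℝ := fun v => dI (e v)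
  let b : Fin (3 * (k + 2) - 2) → ℝ := fun v => bI (e v)
  let c : Fin (3 * (k + 2) - 2) → ℝ := fun v => cI (e v)
  have hd : Function.Injective d := hdI.comp e.injective
  have hbcI : ∀ i, bI i * cI i = 0 := by
    rintro (i | i | i) <;> simp [bI, cI]
  have hyI : ∀ j, bI (Sum.inr j) + cI (Sum.inr j) ≠ 0 := by
    rintro (j | j) <;> simp [bI, cI, hb1, hb2]
  obtain ⟨U, hU, hS, hUy⟩ := aux_U _ H d hd (b + c) (by
    intro v hv
    rcases hev : e v with i | j
    · obtain ⟨w, j, hadj, hw⟩ := he v i hev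
      refine ⟨w, hadj, ?_⟩
      have := hyI j
      rw [← hw] at this
      exact this
    · exfalso
      have := hyI j
      rw [← hev] at this
      exact this hv)
  have hne : ∀ v, (U *ᵥ b) v + (U *ᵥ c) v ≠ 0 := by
    intro v
    have := hUy v
    rw [Matrix.mulVec_add] at this
    exact this
  set a := ∑ i, lam i - ∑ j, mu1 j with ha
  set a' := ∑ i, lam i - ∑ j, mu2 j with ha'
  have haa : a ≠ a' := by
    have : ∑ j, mu1 j < ∑ j, mu2 j :=
      Finset.sum_lt_sum_of_nonempty Finset.univ_nonempty fun j _ => h12 j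
    intro h
    linarith
  obtain ⟨N, hN, hNc⟩ := aux_asm _ H d b c a a' haa U hU hS hne _ rfl
  refine ⟨N, hN, ?_⟩
  have hchar : N.charpoly = (∏ i, (Polynomial.X - Polynomial.C (lam i))) ^ 3 := by
    rw [hNc]
    apply Polynomial.eq_of_infinite_eval_eq
    refine (Set.finite_range d).infinite_compl.mono ?_
    intro x hx
    have hx' : ∀ v, x ≠ d v := fun v h => hx ⟨v, h.symm⟩
    have hxI : ∀ i, x ≠ dI i := fun i => by
      have := hx' (e.symm i)
      simpa [d] using this
    have s1 : ∑ v, b v ^ 2 / (x - d v) = ∑ j, b1 j ^ 2 / (x - mu1 j) := by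
      rw [Equiv.sum_comp e (fun i => bI i ^ 2 / (x - dI i))]
      simp [bI, dI]
    have s2 : ∑ v, c v ^ 2 / (x - d v) = ∑ j, b2 j ^ 2 / (x - mu2 j) := by
      rw [Equiv.sum_comp e (fun i => cI i ^ 2 / (x - dI i))]
      simp [cI, dI]
    have s3 : ∏ v, (x - d v) = (∏ i, (x - lam i)) * ((∏ j, (x - mu1 j)) * ∏ j, (x - mu2 j)) := by
      rw [Equiv.prod_comp e (fun i => x - dI i)]
      simp [dI]
    show Polynomial.eval x _ = Polynomial.eval x _
    rw [aux_det _ d b c (fun v => hbcI (e v)) a a' x hx' _ rfl, s1, s2, s3]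
    have t1 := hid1 x fun j => hxI (Sum.inr (Sum.inl j))
    have t2 := hid2 x fun j => hxI (Sum.inr (Sum.inr j))
    rw [Polynomial.eval_pow, Polynomial.eval_prod]
    simp only [Polynomial.eval_sub, Polynomial.eval_X, Polynomial.eval_C]
    calc _ = (∏ i, (x - lam i)) *
        ((∏ j, (x - mu1 j)) * (x - a - ∑ j, b1 j ^ 2 / (x - mu1 j))) *
        ((∏ j, (x - mu2 j)) * (x - a' - ∑ j, b2 j ^ 2 / (x - mu2 j))) := by ring
      _ = _ := by rw [t1, t2]; ring
  rw [specMultiset, hchar, Polynomial.roots_pow]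
  congr 1
  have := Polynomial.roots_multiset_prod_X_sub_C (Finset.univ.val.map lam)
  rw [Multiset.map_map] at this
  exact this

/-- Example 3.13: for `m = k + 2 ≥ 2` and a connected graph `H` on `3m − 2`
vertices, for any `λ₁ < … < λ_m` some `N ∈ S(K₂ ∨ H)` has spectrum `{λ₁^(3), …, λ_m^(3)}`;
in particular `q(K₂ ∨ H) ≤ m`. -/
theorem statement18 (k : ℕ) (H : SimpleGraph (Fin (3 * (k + 2) - 2))) (hH : H.Connected)
    (lam : Fin (k + 2) → ℝ) (hlam : StrictMono lam) :
    (∃ N : Matrix (Fin 2 ⊕ Fin (3 * (k + 2) - 2)) (Fin 2 ⊕ Fin (3 * (k + 2) - 2)) ℝ,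
      inS (graphJoin (⊤ : SimpleGraph (Fin 2)) H) N ∧
      specMultiset N = 3 • (Finset.univ.val.map lam)) ∧
    qGraph (graphJoin (⊤ : SimpleGraph (Fin 2)) H) ≤ k + 2 := by
  obtain ⟨N, hN, hs⟩ := aux_main k H hH lam hlam
  refine ⟨⟨N, hN, hs⟩, ?_⟩
  have h1 : qGraph (graphJoin (⊤ : SimpleGraph (Fin 2)) H) ≤ qMat N :=
    Nat.sInf_le ⟨N, hN, rfl⟩
  refine h1.trans ?_
  rw [qMat, hs, Multiset.toFinset_nsmul _ _ (by norm_num)]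
  refine (Multiset.toFinset_card_le _).trans ?_
  simp
end
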